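/- Suppose 1 < p < ∞, let p' be the conjugate exponent of p, and let g be holomorphic on the unit disc D. Then the multiplication operator M_g maps the Besov space B^p into the Bloch space 𝓑 if and only if g ∈ H^∞ ∩ 𝓑_{log,1/p'}. -/

import Mathlib

open MeasureTheory Metric Complex Real Filter Set

noncomputable section

/-- `f` is holomorphic on the open unit disc. -/
def HolOn (f : ℂ → ℂ) : Prop := DifferentiableOn ℂ f (Metric.ball (0:ℂ) 1)

/-- The normalized Lebesgue area measure on `ℂ` (so the unit disc has total mass 1). -/
def dA : Measure ℂ := (ENNReal.ofReal π)⁻¹ • volume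

/-- Bounded holomorphic functions on the unit disc. -/
def Hinf : Set (ℂ → ℂ) :=
  {f | HolOn f ∧ ∃ C : ℝ, ∀ z ∈ Metric.ball (0:ℂ) 1, ‖f z‖ ≤ C}

/-- The Bloch space. -/
def Bloch : Set (ℂ → ℂ) :=
  {f | HolOn f ∧ ∃ C : ℝ, ∀ z ∈ Metric.ball (0:ℂ) 1,
      (1 - ‖z‖ ^ 2) * ‖deriv f z‖ ≤ C}

/-- The little Bloch space: `(1-|z|²)|f'(z)| → 0` as `|z| → 1⁻`. -/
def littleBloch : Set (ℂ → ℂ) :=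
  {f | HolOn f ∧ ∀ ε : ℝ, 0 < ε → ∃ r : ℝ, r < 1 ∧ ∀ z ∈ Metric.ball (0:ℂ) 1,
      r < ‖z‖ → (1 - ‖z‖ ^ 2) * ‖deriv f z‖ < ε}

/-- The `α`-logarithmic Bloch space. -/
def BlochLog (α : ℝ) : Set (ℂ → ℂ) :=
  {f | HolOn f ∧ ∃ C : ℝ, ∀ z ∈ Metric.ball (0:ℂ) 1,
      (1 - ‖z‖ ^ 2) * (Real.log (2 / (1 - ‖z‖ ^ 2))) ^ α *
        ‖deriv f z‖ ≤ C}

/-- The Besov space `B¹`: holomorphic `f` with `∫_D |f''| dA < ∞`. -/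
def Besov1 : Set (ℂ → ℂ) :=
  {f | HolOn f ∧ ∫⁻ z in Metric.ball (0:ℂ) 1,
      ENNReal.ofReal (‖deriv (deriv f) z‖) ∂dA < ⊤}

/-- The Besov space `Bᵖ` (`1 < p < ∞`): `∫_D (1-|z|)^(p-2) |f'(z)|^p dA(z) < ∞`. -/
def Besov (p : ℝ) : Set (ℂ → ℂ) :=
  {f | HolOn f ∧ ∫⁻ z in Metric.ball (0:ℂ) 1,
      ENNReal.ofReal ((1 - ‖z‖) ^ (p - 2) * ‖deriv f z‖ ^ p) ∂dA < ⊤}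

open scoped Classical in
/-- The Besov space `Bᵖ` for all `1 ≤ p < ∞` (with the special definition at `p = 1`). -/
def BesovFull (p : ℝ) : Set (ℂ → ℂ) := if p = 1 then Besov1 else Besov p

/-- The Möbius transformation `φ_a(z) = (a-z)/(1 - conj a · z)`. -/
def phi (a z : ℂ) : ℂ := (a - z) / (1 - (starRingEnd ℂ) a * z)

/-- The space `Q_s`. -/
def Qs (s : ℝ) : Set (ℂ → ℂ) :=
  {f | HolOn f ∧ ⨆ a ∈ Metric.ball (0:ℂ) 1, ∫⁻ z in Metric.ball (0:ℂ) 1,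
      ENNReal.ofReal (‖deriv f z‖ ^ 2 *
        (1 - ‖phi a z‖ ^ 2) ^ s) ∂dA < ⊤}

/-- The space `Q_{s,log,α}`. -/
def QsLog (s α : ℝ) : Set (ℂ → ℂ) :=
  {f | HolOn f ∧ ⨆ a ∈ Metric.ball (0:ℂ) 1,
      (ENNReal.ofReal ((Real.log (2 / (1 - ‖a‖))) ^ (2 * α)) *
        ∫⁻ z in Metric.ball (0:ℂ) 1,
          ENNReal.ofReal (‖deriv f z‖ ^ 2 *
            (1 - ‖phi a z‖ ^ 2) ^ s) ∂dA) < ⊤}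

/-- The Volterra operator `T_g(f)(z) = ∫_0^z g'(ξ) f(ξ) dξ` (along the segment from 0 to z). -/
def Tg (g f : ℂ → ℂ) : ℂ → ℂ :=
  fun z => z * ∫ t in (0:ℝ)..1, deriv g ((t : ℂ) * z) * f ((t : ℂ) * z)

/-- The companion operator `I_g(f)(z) = ∫_0^z g(ξ) f'(ξ) dξ` (along the segment from 0 to z). -/
def Ig (g f : ℂ → ℂ) : ℂ → ℂ :=
  fun z => z * ∫ t in (0:ℝ)..1, g ((t : ℂ) * z) * deriv f ((t : ℂ) * z)

/-- The multiplication operator `M_g(f) = g · f`. -/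
def Mg (g f : ℂ → ℂ) : ℂ → ℂ := fun z => g z * f z

/-- `T` maps `X` into `Y`. -/
def MapsInto (T : (ℂ → ℂ) → (ℂ → ℂ)) (X Y : Set (ℂ → ℂ)) : Prop :=
  ∀ f ∈ X, T f ∈ Y

/-- The Hardy space `H^q`. -/
def Hardy (q : ℝ) : Set (ℂ → ℂ) :=
  {f | HolOn f ∧ ∃ C : ℝ, ∀ r : ℝ, 0 < r → r < 1 →
      (1 / (2 * π)) * ∫ t in (0:ℝ)..(2 * π),
        ‖f ((r : ℂ) * Complex.exp ((t : ℂ) * Complex.I))‖ ^ q ≤ C}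

/-- An inner function: bounded holomorphic with radial boundary values of modulus 1 a.e. -/
def IsInner (g : ℂ → ℂ) : Prop :=
  g ∈ Hinf ∧ ∀ᵐ t : ℝ ∂(volume.restrict (Set.Ioc (0:ℝ) (2 * π))),
    Filter.Tendsto (fun r : ℝ => ‖g ((r : ℂ) * Complex.exp ((t : ℂ) * Complex.I))‖)
      (nhdsWithin 1 (Set.Iio 1)) (nhds 1)

/-- `X` has the f-property (division by inner functions). -/
def FProperty (X : Set (ℂ → ℂ)) : Prop :=
  ∀ h ∈ X, ∀ g : ℂ → ℂ, IsInner g →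
    (fun z => h z / g z) ∈ Hardy 1 → (fun z => h z / g z) ∈ X

/-- The space of multipliers `M(X,Y)`. -/
def Mult (X Y : Set (ℂ → ℂ)) : Set (ℂ → ℂ) :=
  {g | HolOn g ∧ ∀ f ∈ X, (fun z => g z * f z) ∈ Y}

end

/-!
For `f` in `B^p` the sub-mean value property of `|f'|^p` gives `(1 - |z|²) |f' z| ≤ C ‖f‖`. Combined
with the bounded overlap of discs centred on a radius and Hölder's inequality with weight
`1 / (1 - t)`, it gives the growth estimate `|f z| ≤ C ‖f‖ (log (2 / (1 - |z|²)))^(1/p')`. Applied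
to the two terms of `(g f)' = g' f + g f'` these estimates prove sufficiency.

Conversely, a uniform boundedness argument over absolutely convergent series of `B^p` functions
turns the qualitative mapping property into a bound on `(1 - |w|²) |(g f)' w|` which is uniform over
each ball of `B^p`. The Möbius maps `φ_w` form a bounded family in `B^p` and vanish at `w`, where
`(1 - |w|²) |φ_w' w| = 1`, so they give `|g w| ≤ C`. The functions
`(log (2 / (1 - |w|²)))^(-1/p) log (2 / (1 - conj w * z))` are also bounded in `B^p`, and at `z = w`
they attain the growth estimate, which together with the boundedness of `g` gives the logarithmic
Bloch condition. The norms of both families reduce to the integrals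
`∫ (1 - |z|)^(p-2) / |1 - conj w * z|^q dA(z)`, computed in polar coordinates.
-/

open scoped ENNReal NNReal ComplexConjugate

section MeanValue

theorem lintegral_mul_rpow_le {α : Type*} {m : MeasurableSpace α} {μ : Measure α} {p : ℝ}
    (hp : 1 ≤ p) {w f : α → ℝ≥0∞} (hw : AEMeasurable w μ) (hf : AEMeasurable f μ) :
    (∫⁻ x, w x * f x ∂μ) ^ p ≤ (∫⁻ x, w x ∂μ) ^ (p - 1) * ∫⁻ x, w x * f x ^ p ∂μ := by
  have hp0 : 0 < p := by linarith
  have hq : 0 ≤ 1 - 1 / p := sub_nonneg.2 ((div_le_one hp0).2 hp)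
  have split (x : α) : w x * f x = (w x * f x ^ p) ^ (1 / p) * w x ^ (1 - 1 / p) := by
    rw [ENNReal.mul_rpow_of_nonneg _ _ (by positivity), ← ENNReal.rpow_mul,
      mul_one_div_cancel hp0.ne', ENNReal.rpow_one, mul_right_comm,
      ← ENNReal.rpow_add_of_nonneg _ _ (by positivity) hq, add_sub_cancel, ENNReal.rpow_one]
  have holder := ENNReal.lintegral_mul_norm_pow_le (hw.mul (hf.pow_const p)) hw
    (by positivity) hq (add_sub_cancel (1 / p) 1)
  calc (∫⁻ x, w x * f x ∂μ) ^ p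
      ≤ ((∫⁻ x, w x * f x ^ p ∂μ) ^ (1 / p) * (∫⁻ x, w x ∂μ) ^ (1 - 1 / p)) ^ p := by
        simp only [split]; gcongr; exact holder
    _ = (∫⁻ x, w x ∂μ) ^ (p - 1) * ∫⁻ x, w x * f x ^ p ∂μ := by
        rw [ENNReal.mul_rpow_of_nonneg _ _ hp0.le, ← ENNReal.rpow_mul, ← ENNReal.rpow_mul,
          one_div_mul_cancel hp0.ne', ENNReal.rpow_one, sub_mul, one_mul,
          one_div_mul_cancel hp0.ne', mul_comm]

theorem setLIntegral_ball_eq_circleMap {G : ℂ → ℝ≥0∞} (hG : Measurable G) (c : ℂ) (R : ℝ) :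
    ∫⁻ u in ball c R, G u =
      ∫⁻ ρ in Ioo 0 R, ∫⁻ θ in Ioo (-π) π, ENNReal.ofReal ρ * G (circleMap c ρ θ) := by
  set H : ℂ → ℝ≥0∞ := fun u => (ball c R).indicator G (c + u)
  have hH : Measurable H := (hG.indicator measurableSet_ball).comp (measurable_const_add c)
  have polar : ∫⁻ u, H u = ∫⁻ ρ in Ioi (0 : ℝ), ∫⁻ θ in Ioo (-π) π,
      ENNReal.ofReal ρ * H (circleMap 0 ρ θ) := by
    rw [← Complex.lintegral_comp_polarCoord_symm, polarCoord_target, Measure.volume_eq_prod,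
      ← Measure.prod_restrict, lintegral_prod _ (by
        simp only [Complex.polarCoord_symm_apply, smul_eq_mul]
        fun_prop)]
    simp [circleMap_zero, Complex.exp_mul_I]
  have inside (ρ : ℝ) (hρ : ρ ∈ Ioi (0 : ℝ)) (θ : ℝ) :
      ENNReal.ofReal ρ * H (circleMap 0 ρ θ) =
        (Ioo 0 R).indicator (fun ρ => ENNReal.ofReal ρ * G (circleMap c ρ θ)) ρ := by
    have hsum : c + circleMap 0 ρ θ = circleMap c ρ θ := by simp [circleMap]
    have hnorm : circleMap c ρ θ ∈ ball c R ↔ ρ ∈ Ioo 0 R := by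
      simp [dist_eq_norm, abs_of_pos (mem_Ioi.1 hρ), mem_Ioi.1 hρ]
    by_cases hR : ρ ∈ Ioo 0 R <;> simp only [H, hsum, indicator, hnorm, hR, if_true, if_false,
      mul_zero]
  calc ∫⁻ u in ball c R, G u = ∫⁻ u, H u := by
        rw [← lintegral_indicator measurableSet_ball, ← lintegral_add_left_eq_self _ c]
    _ = ∫⁻ ρ in Ioi (0 : ℝ), (Ioo 0 R).indicator
          (fun ρ => ∫⁻ θ in Ioo (-π) π, ENNReal.ofReal ρ * G (circleMap c ρ θ)) ρ := by
        rw [polar]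
        refine setLIntegral_congr_fun measurableSet_Ioi fun ρ hρ => ?_
        simp only [inside ρ hρ]
        by_cases hR : ρ ∈ Ioo 0 R <;> simp [indicator, hR]
    _ = ∫⁻ ρ in Ioo 0 R, ∫⁻ θ in Ioo (-π) π, ENNReal.ofReal ρ * G (circleMap c ρ θ) := by
        rw [setLIntegral_indicator measurableSet_Ioo, inter_eq_left.2 Ioo_subset_Ioi_self]

variable {E : Type*} [NormedAddCommGroup E] [NormedSpace ℂ E] [CompleteSpace E]
  {h : ℂ → E} {z : ℂ} {r : ℝ}

theorem enorm_mul_le_lintegral_circleMap (hh : DiffContOnCl ℂ h (ball z |r|)) :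
    ‖h z‖ₑ * ENNReal.ofReal (2 * π) ≤ ∫⁻ θ in Ioo (-π) π, ‖h (circleMap z r θ)‖ₑ := by
  have mean : ∫ θ in (-π)..π, h (circleMap z r θ) = (2 * π) • h z := by
    have periodic : Function.Periodic (fun θ => h (circleMap z r θ)) (2 * π) :=
      fun θ => by simp [periodic_circleMap z r θ]
    have shift := periodic.intervalIntegral_add_eq (-π) 0
    rw [zero_add, show -π + 2 * π = π by ring] at shift
    rw [shift, ← hh.circleAverage, circleAverage_def, smul_inv_smul₀ (by positivity)]
  calc ‖h z‖ₑ * ENNReal.ofReal (2 * π) = ‖∫ θ in (-π)..π, h (circleMap z r θ)‖ₑ := by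
        rw [mean, enorm_smul, Real.enorm_eq_ofReal (by positivity), mul_comm]
    _ ≤ ∫⁻ θ in Ioo (-π) π, ‖h (circleMap z r θ)‖ₑ := by
        rw [intervalIntegral.integral_of_le (by linarith [Real.pi_pos]),
          integral_Ioc_eq_integral_Ioo]
        exact enorm_integral_le_lintegral_enorm _

theorem enorm_mul_volume_ball_le_lintegral (hh : DifferentiableOn ℂ h (ball z r)) :
    ‖h z‖ₑ * volume (ball z r) ≤ ∫⁻ u in ball z r, ‖h u‖ₑ := by
  set G : ℂ → ℝ≥0∞ := (ball z r).indicator (fun u => ‖h u‖ₑ)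
  have hG : Measurable G := by
    classical
    have piecewise : G = (ball z r).piecewise (fun u => ‖h u‖ₑ) (fun _ => 0) :=
      (piecewise_eq_indicator).symm
    rw [piecewise]
    exact (continuous_enorm.comp_continuousOn hh.continuousOn).measurable_piecewise
      continuousOn_const measurableSet_ball
  have hGh {u : ℂ} (hu : u ∈ ball z r) : G u = ‖h u‖ₑ := indicator_of_mem hu _
  calc ‖h z‖ₑ * volume (ball z r)
      = ∫⁻ ρ in Ioo 0 r, ∫⁻ _ in Ioo (-π) π, ENNReal.ofReal ρ * ‖h z‖ₑ := by
        rw [← setLIntegral_const, setLIntegral_ball_eq_circleMap measurable_const]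
    _ ≤ ∫⁻ ρ in Ioo 0 r, ∫⁻ θ in Ioo (-π) π, ENNReal.ofReal ρ * G (circleMap z ρ θ) := by
        refine setLIntegral_mono' measurableSet_Ioo fun ρ ⟨hρ0, hρr⟩ => ?_
        have hsub : closedBall z |ρ| ⊆ ball z r :=
          closedBall_subset_ball (by rwa [abs_of_pos hρ0])
        have circle := enorm_mul_le_lintegral_circleMap
          (hh.mono (closure_ball_subset_closedBall.trans hsub)).diffContOnCl
        have onCircle (θ : ℝ) : G (circleMap z ρ θ) = ‖h (circleMap z ρ θ)‖ₑ :=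
          hGh (hsub (sphere_subset_closedBall (circleMap_mem_sphere' z ρ θ)))
        rw [lintegral_const_mul _ (by fun_prop), lintegral_const_mul _ (by fun_prop)]
        simp only [onCircle, setLIntegral_const, Real.volume_Ioo, sub_neg_eq_add]
        gcongr
        rwa [← two_mul]
    _ = ∫⁻ u in ball z r, ‖h u‖ₑ := by
        rw [← setLIntegral_ball_eq_circleMap hG]
        exact setLIntegral_congr_fun measurableSet_ball fun u hu => hGh hu

theorem enorm_rpow_mul_volume_ball_le_lintegral {p : ℝ} (hp : 1 ≤ p)
    (hh : DifferentiableOn ℂ h (ball z r)) :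
    ‖h z‖ₑ ^ p * volume (ball z r) ≤ ∫⁻ u in ball z r, ‖h u‖ₑ ^ p := by
  rcases le_or_gt r 0 with hr | hr
  · simp [ball_eq_empty.2 hr]
  set V := volume (ball z r)
  have hV0 : V ≠ 0 := (measure_ball_pos _ _ hr).ne'
  have hVt : V ≠ ⊤ := measure_ball_lt_top.ne
  have hm : AEMeasurable (fun u => ‖h u‖ₑ) (volume.restrict (ball z r)) :=
    (continuous_enorm.comp_continuousOn hh.continuousOn).aemeasurable measurableSet_ball
  have jensen := lintegral_mul_rpow_le (μ := volume.restrict (ball z r)) hp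
    (aemeasurable_const (b := 1)) hm
  simp only [one_mul, setLIntegral_one] at jensen
  have key : V ^ (p - 1) * (‖h z‖ₑ ^ p * V) ≤ V ^ (p - 1) * ∫⁻ u in ball z r, ‖h u‖ₑ ^ p :=
    calc V ^ (p - 1) * (‖h z‖ₑ ^ p * V) = (‖h z‖ₑ * V) ^ p := by
          rw [ENNReal.mul_rpow_of_nonneg _ _ (by linarith), mul_left_comm]
          nth_rw 2 [← ENNReal.rpow_one V]
          rw [← ENNReal.rpow_add _ _ hV0 hVt, sub_add_cancel]
      _ ≤ (∫⁻ u in ball z r, ‖h u‖ₑ) ^ p := by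
          gcongr; exact enorm_mul_volume_ball_le_lintegral hh
      _ ≤ _ := jensen
  exact (ENNReal.mul_le_mul_iff_right (by simp [hV0, hVt]) (by simp [hV0, hVt])).1 key

end MeanValue

section Besov

variable {p : ℝ} {f : ℂ → ℂ} {z u : ℂ}

theorem HolOn.differentiableAt (hf : HolOn f) (hz : ‖z‖ < 1) : DifferentiableAt ℂ f z :=
  DifferentiableOn.differentiableAt hf (isOpen_ball.mem_nhds (mem_ball_zero_iff.2 hz))

theorem HolOn.holOn_deriv (hf : HolOn f) : HolOn (deriv f) :=
  DifferentiableOn.deriv hf isOpen_ball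

/-- The integrand `(1 - |z|) ^ (p - 2) * |f' z| ^ p` of the Besov seminorm, with values in
`ℝ≥0∞` so that its integrals never take junk values. -/
noncomputable def besovDensity (p : ℝ) (f : ℂ → ℂ) (z : ℂ) : ℝ≥0∞ :=
  ENNReal.ofReal ((1 - ‖z‖) ^ (p - 2)) * ‖deriv f z‖ₑ ^ p

/-- The `p`-th power of the Besov seminorm, taken with respect to the Lebesgue measure rather than
its normalization `dA`. -/
noncomputable def besovEnergy (p : ℝ) (f : ℂ → ℂ) : ℝ≥0∞ :=
  ∫⁻ z in ball 0 1, besovDensity p f z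

/-- The norm-bounded subsets `{f | |f 0| ≤ K, ‖f‖ ^ p ≤ K}` of `B^p`. -/
def besovBall (p : ℝ) (K : ℝ≥0) : Set (ℂ → ℂ) :=
  {f | HolOn f ∧ ‖f 0‖ ≤ K ∧ besovEnergy p f ≤ K}

theorem mem_besov_iff (hp : 0 ≤ p) : f ∈ Besov p ↔ HolOn f ∧ besovEnergy p f < ⊤ := by
  have density (z : ℂ) (hz : z ∈ ball (0 : ℂ) 1) :
      ENNReal.ofReal ((1 - ‖z‖) ^ (p - 2) * ‖deriv f z‖ ^ p) = besovDensity p f z := by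
    have : 0 ≤ 1 - ‖z‖ := by linarith [mem_ball_zero_iff.1 hz]
    rw [besovDensity, ENNReal.ofReal_mul (by positivity), ← ofReal_norm,
      ENNReal.ofReal_rpow_of_nonneg (norm_nonneg _) hp]
  have hπ : (ENNReal.ofReal π)⁻¹ ≠ 0 := by simp
  have hπ' : (ENNReal.ofReal π)⁻¹ ≠ ⊤ := by simp [Real.pi_pos]
  refine and_congr_right fun _ => ?_
  rw [setLIntegral_congr_fun measurableSet_ball density, dA, Measure.restrict_smul,
    lintegral_smul_measure, smul_eq_mul, ENNReal.mul_lt_top_iff]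
  simp only [hπ, hπ'.lt_top, besovEnergy, true_and, false_or, or_iff_left_iff_imp]
  exact fun h => h ▸ ENNReal.zero_lt_top

theorem exists_mem_besovBall (hp : 0 ≤ p) (hf : f ∈ Besov p) : ∃ K, f ∈ besovBall p K := by
  obtain ⟨hol, fin⟩ := (mem_besov_iff hp).1 hf
  lift besovEnergy p f to ℝ≥0 using fin.ne with E hE
  refine ⟨max ‖f 0‖₊ E, hol, ?_, ?_⟩
  · simp [← coe_nnnorm]
  · rw [← hE]; exact_mod_cast le_max_right _ _

theorem aemeasurable_besovDensity (hf : HolOn f) :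
    AEMeasurable (besovDensity p f) (volume.restrict (ball 0 1)) := by
  have weight : Measurable fun z : ℂ => ENNReal.ofReal ((1 - ‖z‖) ^ (p - 2)) := by fun_prop
  have derivative : AEMeasurable (fun z => ‖deriv f z‖ₑ) (volume.restrict (ball 0 1)) :=
    (continuous_enorm.comp_continuousOn hf.holOn_deriv.continuousOn).aemeasurable measurableSet_ball
  exact weight.aemeasurable.mul (derivative.pow_const p)

/-- The disc about `z` of half the distance from `z` to the unit circle. Throughout it
`1 - |u|` is comparable with `1 - |z|`. -/
def whitneyDisc (z : ℂ) : Set ℂ := ball z ((1 - ‖z‖) / 2)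

theorem one_sub_norm_mem_Icc_of_mem_whitneyDisc (hu : u ∈ whitneyDisc z) :
    1 - ‖u‖ ∈ Icc ((1 - ‖z‖) / 2) (3 / 2 * (1 - ‖z‖)) := by
  have near : ‖u - z‖ < (1 - ‖z‖) / 2 := mem_ball_iff_norm.1 hu
  obtain ⟨lower, upper⟩ := abs_le.1 (abs_norm_sub_norm_le u z)
  constructor <;> linarith

theorem whitneyDisc_subset_ball (hz : ‖z‖ < 1) : whitneyDisc z ⊆ ball 0 1 := fun u hu => by
  have := (one_sub_norm_mem_Icc_of_mem_whitneyDisc hu).1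
  rw [mem_ball_zero_iff]
  linarith

theorem exists_mul_rpow_le_of_mem_whitneyDisc (s : ℝ) :
    ∃ c : ℝ, 0 < c ∧ ∀ z u : ℂ, ‖z‖ < 1 → u ∈ whitneyDisc z →
      c * (1 - ‖z‖) ^ s ≤ (1 - ‖u‖) ^ s := by
  refine ⟨min ((1 / 2) ^ s) ((3 / 2) ^ s), by positivity, fun z u hz hu => ?_⟩
  obtain ⟨lower, upper⟩ := one_sub_norm_mem_Icc_of_mem_whitneyDisc hu
  have hz' : 0 < 1 - ‖z‖ := by linarith
  rcases le_total 0 s with hs | hs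
  · calc _ ≤ (1 / 2) ^ s * (1 - ‖z‖) ^ s := by gcongr; exact min_le_left _ _
      _ = ((1 - ‖z‖) / 2) ^ s := by rw [← Real.mul_rpow (by norm_num) hz'.le]; ring_nf
      _ ≤ (1 - ‖u‖) ^ s := by gcongr
  · calc _ ≤ (3 / 2) ^ s * (1 - ‖z‖) ^ s := by gcongr; exact min_le_right _ _
      _ = (3 / 2 * (1 - ‖z‖)) ^ s := (Real.mul_rpow (by norm_num) hz'.le).symm
      _ ≤ (1 - ‖u‖) ^ s := Real.rpow_le_rpow_of_nonpos (by linarith) upper hs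

theorem exists_enorm_deriv_rpow_le_lintegral_whitneyDisc (hp : 1 ≤ p) :
    ∃ C : ℝ≥0, ∀ f, HolOn f → ∀ z : ℂ, ‖z‖ < 1 →
      (ENNReal.ofReal (1 - ‖z‖) * ‖deriv f z‖ₑ) ^ p ≤
        C * ∫⁻ u in whitneyDisc z, besovDensity p f u := by
  obtain ⟨c, hc, weight⟩ := exists_mul_rpow_le_of_mem_whitneyDisc (p - 2)
  refine ⟨(4 / (π * c)).toNNReal, fun f hf z hz => ?_⟩
  set s := 1 - ‖z‖
  have hs : 0 < s := sub_pos.2 hz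
  have normalization : ENNReal.ofReal s ^ p = ENNReal.ofReal (4 / (π * c)) *
      (ENNReal.ofReal (c * s ^ (p - 2)) * volume (whitneyDisc z)) := by
    have hvol : volume (whitneyDisc z) = ENNReal.ofReal (π * (s / 2) ^ 2) := by
      rw [whitneyDisc, Complex.volume_ball, ENNReal.ofReal_mul Real.pi_nonneg,
        ENNReal.ofReal_pow (by positivity), mul_comm]
      congr 1
      exact (ENNReal.ofReal_coe_nnreal (p := NNReal.pi)).symm
    have hsp : s ^ p = s ^ (p - 2) * s ^ 2 := by
      rw [← Real.rpow_natCast, ← Real.rpow_add hs]; simp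
    rw [hvol, ENNReal.ofReal_rpow_of_pos hs, ← ENNReal.ofReal_mul (by positivity),
      ← ENNReal.ofReal_mul (by positivity), hsp]
    congr 1
    field_simp
    norm_num
  have mean := enorm_rpow_mul_volume_ball_le_lintegral hp
    (hf.holOn_deriv.mono (whitneyDisc_subset_ball hz))
  calc (ENNReal.ofReal s * ‖deriv f z‖ₑ) ^ p
      = ENNReal.ofReal (4 / (π * c)) * (ENNReal.ofReal (c * s ^ (p - 2)) *
          (‖deriv f z‖ₑ ^ p * volume (whitneyDisc z))) := by
        rw [ENNReal.mul_rpow_of_nonneg _ _ (by linarith), normalization]; ring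
    _ ≤ ENNReal.ofReal (4 / (π * c)) * ∫⁻ u in whitneyDisc z, besovDensity p f u := by
        gcongr
        refine (mul_le_mul_right mean _).trans ?_
        rw [← lintegral_const_mul' _ _ ENNReal.ofReal_ne_top]
        refine setLIntegral_mono' measurableSet_ball fun u hu => ?_
        rw [besovDensity]
        gcongr
        exact weight z u hz hu

theorem exists_bloch_bound (hp : 1 ≤ p) (K : ℝ≥0) :
    ∃ C : ℝ, ∀ f ∈ besovBall p K, ∀ z : ℂ, ‖z‖ < 1 → (1 - ‖z‖ ^ 2) * ‖deriv f z‖ ≤ C := by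
  obtain ⟨C, hC⟩ := exists_enorm_deriv_rpow_le_lintegral_whitneyDisc hp
  refine ⟨2 * (C * K) ^ (1 / p), fun f ⟨hf, _, energy⟩ z hz => ?_⟩
  have hz' : 0 ≤ 1 - ‖z‖ := by linarith
  have local_le : (ENNReal.ofReal (1 - ‖z‖) * ‖deriv f z‖ₑ) ^ p ≤ (C * K : ℝ≥0) := by
    push_cast
    refine (hC f hf z hz).trans ?_
    gcongr
    exact (lintegral_mono_set (whitneyDisc_subset_ball hz)).trans energy
  have hreal : ((1 - ‖z‖) * ‖deriv f z‖) ^ p ≤ C * K := by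
    rw [← ofReal_norm, ← ENNReal.ofReal_mul hz', ENNReal.ofReal_rpow_of_nonneg (by positivity)
      (by linarith)] at local_le
    exact_mod_cast (ENNReal.ofReal_le_iff_le_toReal ENNReal.coe_ne_top).1 local_le
  have hroot : (1 - ‖z‖) * ‖deriv f z‖ ≤ (C * K) ^ (1 / p) := by
    rwa [one_div, Real.le_rpow_inv_iff_of_pos (by positivity) (by positivity) (by linarith)]
  calc (1 - ‖z‖ ^ 2) * ‖deriv f z‖ = (1 + ‖z‖) * ((1 - ‖z‖) * ‖deriv f z‖) := by ring
    _ ≤ 2 * (C * K) ^ (1 / p) := by gcongr; linarith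

end Besov

section Growth

variable {p : ℝ} {f : ℂ → ℂ} {z ζ : ℂ}

/-- The weight `1 / (1 - t)` restricted to those `t` for which `u` lies in the Whitney disc of the
point `t * ζ` of the radius towards `ζ`. -/
noncomputable def whitneyKernel (ζ : ℂ) (t : ℝ) (u : ℂ) : ℝ≥0∞ :=
  (whitneyDisc (t * ζ)).indicator (fun _ => ENNReal.ofReal (1 - t)⁻¹) u

theorem measurable_whitneyKernel (ζ : ℂ) : Measurable (Function.uncurry (whitneyKernel ζ)) := by
  have hS : MeasurableSet {x : ℝ × ℂ | x.2 ∈ whitneyDisc (x.1 * ζ)} := by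
    simp only [whitneyDisc, mem_ball]
    exact measurableSet_lt (by fun_prop) (by fun_prop)
  exact (show Measurable fun x : ℝ × ℂ => ENNReal.ofReal (1 - x.1)⁻¹ by fun_prop).indicator hS

theorem lintegral_whitneyKernel_le (hζ : ‖ζ‖ = 1) {u : ℂ} (hu : ‖u‖ < 1) :
    ∫⁻ t in Ioo (0 : ℝ) 1, whitneyKernel ζ t u ≤ 3 := by
  have hu' : 0 < 1 - ‖u‖ := sub_pos.2 hu
  have overlap (t : ℝ) (ht : t ∈ Ioo 0 1) :
      whitneyKernel ζ t u ≤ (Icc (1 - 2 * (1 - ‖u‖)) 1).indicator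
        (fun _ => ENNReal.ofReal (3 / 2 / (1 - ‖u‖))) t := by
    rw [whitneyKernel]
    refine indicator_apply_le' (fun hmem => ?_) fun _ => zero_le
    have norm_eq : ‖(t : ℂ) * ζ‖ = t := by simp [hζ, abs_of_pos ht.1]
    have ht' : 0 < 1 - t := sub_pos.2 ht.2
    obtain ⟨lower, upper⟩ := one_sub_norm_mem_Icc_of_mem_whitneyDisc hmem
    rw [norm_eq] at lower upper
    rw [indicator_of_mem (by constructor <;> linarith)]
    refine ENNReal.ofReal_le_ofReal ?_
    rw [inv_eq_one_div, div_le_div_iff₀ ht' hu']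
    linarith
  calc _ ≤ ∫⁻ t in Ioo (0 : ℝ) 1, (Icc (1 - 2 * (1 - ‖u‖)) 1).indicator
          (fun _ => ENNReal.ofReal (3 / 2 / (1 - ‖u‖))) t :=
        setLIntegral_mono' measurableSet_Ioo overlap
    _ ≤ ENNReal.ofReal (3 / 2 / (1 - ‖u‖)) * volume (Icc (1 - 2 * (1 - ‖u‖)) 1) := by
        rw [← setLIntegral_const, ← lintegral_indicator measurableSet_Icc]
        exact setLIntegral_le_lintegral _ _
    _ = 3 := by
        rw [Real.volume_Icc, ← ENNReal.ofReal_mul (by positivity)]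
        convert ENNReal.ofReal_ofNat 3 using 2
        field_simp
        ring

theorem lintegral_whitneyKernel_mul_besovDensity_le (hf : HolOn f) (hζ : ‖ζ‖ = 1) :
    ∫⁻ t in Ioo (0 : ℝ) 1, ∫⁻ u in ball 0 1, whitneyKernel ζ t u * besovDensity p f u ≤
      3 * besovEnergy p f := by
  have hk := measurable_whitneyKernel ζ
  calc ∫⁻ t in Ioo (0 : ℝ) 1, ∫⁻ u in ball 0 1, whitneyKernel ζ t u * besovDensity p f u
      = ∫⁻ u in ball 0 1, ∫⁻ t in Ioo (0 : ℝ) 1, whitneyKernel ζ t u * besovDensity p f u :=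
        lintegral_lintegral_swap (hk.aemeasurable.mul (aemeasurable_besovDensity hf).comp_snd)
    _ = ∫⁻ u in ball 0 1, (∫⁻ t in Ioo (0 : ℝ) 1, whitneyKernel ζ t u) * besovDensity p f u := by
        congr 1 with u
        exact lintegral_mul_const _ hk.of_uncurry_right
    _ ≤ ∫⁻ u in ball 0 1, 3 * besovDensity p f u := by
        refine setLIntegral_mono' measurableSet_ball fun u hu => ?_
        gcongr
        exact lintegral_whitneyKernel_le hζ (mem_ball_zero_iff.1 hu)
    _ = 3 * besovEnergy p f := lintegral_const_mul' _ _ ENNReal.ofNat_ne_top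

theorem exists_lintegral_radius_le (hp : 1 ≤ p) :
    ∃ C : ℝ≥0, ∀ f, HolOn f → ∀ ζ : ℂ, ‖ζ‖ = 1 →
      ∫⁻ t in Ioo (0 : ℝ) 1, ENNReal.ofReal (1 - t)⁻¹ *
        (ENNReal.ofReal (1 - t) * ‖deriv f (t * ζ)‖ₑ) ^ p ≤ C * besovEnergy p f := by
  obtain ⟨C, hC⟩ := exists_enorm_deriv_rpow_le_lintegral_whitneyDisc hp
  refine ⟨C * 3, fun f hf ζ hζ => ?_⟩
  have local_bound (t : ℝ) (ht : t ∈ Ioo (0 : ℝ) 1) : ENNReal.ofReal (1 - t)⁻¹ *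
      (ENNReal.ofReal (1 - t) * ‖deriv f (t * ζ)‖ₑ) ^ p ≤
        C * ∫⁻ u in ball 0 1, whitneyKernel ζ t u * besovDensity p f u := by
    have norm_eq : ‖(t : ℂ) * ζ‖ = t := by simp [hζ, abs_of_pos ht.1]
    have hball : ‖(t : ℂ) * ζ‖ < 1 := norm_eq.trans_lt ht.2
    have bound := hC f hf (t * ζ) hball
    rw [norm_eq] at bound
    calc ENNReal.ofReal (1 - t)⁻¹ * (ENNReal.ofReal (1 - t) * ‖deriv f (t * ζ)‖ₑ) ^ p
        ≤ ENNReal.ofReal (1 - t)⁻¹ * (C * ∫⁻ u in whitneyDisc (t * ζ), besovDensity p f u) :=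
          mul_le_mul_right bound _
      _ = C * ∫⁻ u in whitneyDisc (t * ζ), whitneyKernel ζ t u * besovDensity p f u := by
          rw [mul_left_comm, ← lintegral_const_mul' _ _ ENNReal.ofReal_ne_top]
          congr 1
          refine setLIntegral_congr_fun measurableSet_ball fun u hu => ?_
          rw [whitneyKernel, indicator_of_mem hu]
      _ ≤ C * ∫⁻ u in ball 0 1, whitneyKernel ζ t u * besovDensity p f u :=
          mul_le_mul_right (lintegral_mono_set (whitneyDisc_subset_ball hball)) _
  refine (setLIntegral_mono' measurableSet_Ioo local_bound).trans ?_
  rw [lintegral_const_mul' _ _ ENNReal.coe_ne_top, ENNReal.coe_mul, mul_assoc]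
  exact mul_le_mul_right (lintegral_whitneyKernel_mul_besovDensity_le hf hζ) _

theorem HolOn.enorm_sub_le_lintegral_deriv (hf : HolOn f) (hζ : ‖ζ‖ = 1) {R : ℝ} (hR0 : 0 ≤ R)
    (hR : R < 1) : ‖f (R * ζ) - f 0‖ₑ ≤ ∫⁻ t in Ioo 0 R, ‖deriv f (t * ζ)‖ₑ := by
  have inside {t : ℝ} (ht : t ∈ uIcc 0 R) : ‖(t : ℂ) * ζ‖ < 1 := by
    rw [uIcc_of_le hR0] at ht
    simpa [hζ, abs_of_nonneg ht.1] using ht.2.trans_lt hR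
  have derivative (t : ℝ) (ht : t ∈ uIcc 0 R) :
      HasDerivAt (fun t : ℝ => f (t * ζ)) (deriv f (t * ζ) * ζ) t := by
    have line : HasDerivAt (fun t : ℝ => (t : ℂ) * ζ) ζ t := by
      simpa using (Complex.ofRealCLM.hasDerivAt (x := t)).mul_const ζ
    exact (hf.differentiableAt (inside ht)).hasDerivAt.comp t line
  have integrable : IntervalIntegrable (fun t : ℝ => deriv f (t * ζ) * ζ) volume 0 R := by
    refine ContinuousOn.intervalIntegrable (ContinuousOn.mul ?_ continuousOn_const)
    exact hf.holOn_deriv.continuousOn.comp (by fun_prop) fun t ht => mem_ball_zero_iff.2 (inside ht)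
  have ftc := intervalIntegral.integral_eq_sub_of_hasDerivAt derivative integrable
  rw [Complex.ofReal_zero, zero_mul] at ftc
  rw [← ftc, intervalIntegral.integral_of_le hR0, integral_Ioc_eq_integral_Ioo]
  refine (enorm_integral_le_lintegral_enorm _).trans_eq ?_
  have hζ' : ‖ζ‖ₑ = 1 := by rw [← ofReal_norm, hζ, ENNReal.ofReal_one]
  simp only [enorm_mul, hζ', mul_one]

theorem lintegral_Ioo_ofReal_of_hasDerivAt {G G' : ℝ → ℝ} {a b : ℝ} (hab : a ≤ b)
    (continuous : ContinuousOn G (Icc a b)) (hderiv : ∀ x ∈ Ioo a b, HasDerivAt G (G' x) x)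
    (nonneg : ∀ x ∈ Ioo a b, 0 ≤ G' x) :
    ∫⁻ x in Ioo a b, ENNReal.ofReal (G' x) = ENNReal.ofReal (G b - G a) := by
  have integrable := intervalIntegral.integrableOn_deriv_of_nonneg continuous hderiv nonneg
  rw [← ofReal_integral_eq_lintegral_ofReal (integrable.mono_set Ioo_subset_Ioc_self),
    ← integral_Ioc_eq_integral_Ioo, ← intervalIntegral.integral_of_le hab,
    intervalIntegral.integral_eq_sub_of_hasDerivAt_of_le hab continuous hderiv
      ((intervalIntegrable_iff_integrableOn_Ioc_of_le hab).2 integrable)]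
  filter_upwards [ae_restrict_mem measurableSet_Ioo] with x hx using nonneg x hx

theorem lintegral_inv_one_sub {R : ℝ} (hR0 : 0 ≤ R) (hR : R < 1) :
    ∫⁻ t in Ioo 0 R, ENNReal.ofReal (1 - t)⁻¹ = ENNReal.ofReal (-Real.log (1 - R)) := by
  rw [lintegral_Ioo_ofReal_of_hasDerivAt (G := fun t => -Real.log (1 - t)) hR0]
  · simp
  · exact (ContinuousOn.log (by fun_prop) fun t ht => by linarith [ht.2]).neg
  · intro t ht
    have pos : 0 < 1 - t := by linarith [ht.2]
    refine (((hasDerivAt_id t).const_sub 1).log pos.ne').neg.congr_deriv ?_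
    rw [neg_div, neg_neg, one_div, id]
  · intro t ht
    exact inv_nonneg.2 (by linarith [ht.2])

/-- The logarithmic weight `log (2 / (1 - |z| ^ 2))` of the spaces `BlochLog`. -/
noncomputable def logWeight (z : ℂ) : ℝ := Real.log (2 / (1 - ‖z‖ ^ 2))

theorem log_two_le_logWeight (hz : ‖z‖ < 1) : Real.log 2 ≤ logWeight z := by
  have hz' : 0 < 1 - ‖z‖ ^ 2 := by nlinarith [norm_nonneg z]
  refine Real.log_le_log (by norm_num) ?_
  rw [le_div_iff₀ hz']
  nlinarith [norm_nonneg z]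

theorem logWeight_pos (hz : ‖z‖ < 1) : 0 < logWeight z :=
  (Real.log_pos one_lt_two).trans_le (log_two_le_logWeight hz)

theorem neg_log_one_sub_norm_le_logWeight (hz : ‖z‖ < 1) :
    -Real.log (1 - ‖z‖) ≤ logWeight z := by
  have hz' : 0 < 1 - ‖z‖ ^ 2 := by nlinarith [norm_nonneg z]
  rw [← Real.log_inv]
  refine Real.log_le_log (inv_pos.2 (by linarith)) ?_
  rw [inv_eq_one_div, div_le_div_iff₀ (by linarith) hz']
  nlinarith [norm_nonneg z]

theorem exists_enorm_sub_rpow_le (hp : 1 ≤ p) :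
    ∃ C : ℝ≥0, ∀ f, HolOn f → ∀ z : ℂ, ‖z‖ < 1 →
      ‖f z - f 0‖ₑ ^ p ≤ ENNReal.ofReal (logWeight z) ^ (p - 1) * (C * besovEnergy p f) := by
  obtain ⟨C, hC⟩ := exists_lintegral_radius_le hp
  refine ⟨C, fun f hf z hz => ?_⟩
  obtain ⟨ζ, hζ, hzζ⟩ := Complex.exists_norm_mul_eq_self z
  set I := Ioo 0 ‖z‖
  set w : ℝ → ℝ≥0∞ := fun t => ENNReal.ofReal (1 - t)⁻¹
  set F : ℝ → ℝ≥0∞ := fun t => ENNReal.ofReal (1 - t) * ‖deriv f (t * ζ)‖ₑ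
  have hw : Measurable w := by fun_prop
  have hI : I ⊆ Ioo 0 1 := Ioo_subset_Ioo_right hz.le
  have hF : AEMeasurable F (volume.restrict I) := by
    have continuous : ContinuousOn (fun t : ℝ => deriv f (t * ζ)) I :=
      hf.holOn_deriv.continuousOn.comp (by fun_prop) fun t ht => by
        simpa [hζ, abs_of_pos ht.1] using (hI ht).2
    exact (show Measurable fun t : ℝ => ENNReal.ofReal (1 - t) by fun_prop).aemeasurable.mul
      ((continuous_enorm.comp_continuousOn continuous).aemeasurable measurableSet_Ioo)
  have path : ‖f z - f 0‖ₑ ≤ ∫⁻ t in I, w t * F t := by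
    have := hf.enorm_sub_le_lintegral_deriv hζ (norm_nonneg z) hz
    rw [mul_comm, hzζ] at this
    refine this.trans_eq (setLIntegral_congr_fun measurableSet_Ioo fun t ht => ?_)
    have ht' : 0 < 1 - t := by linarith [(hI ht).2]
    rw [← mul_assoc, ← ENNReal.ofReal_mul (by positivity), inv_mul_cancel₀ ht'.ne',
      ENNReal.ofReal_one, one_mul]
  calc ‖f z - f 0‖ₑ ^ p ≤ (∫⁻ t in I, w t * F t) ^ p := by gcongr
    _ ≤ (∫⁻ t in I, w t) ^ (p - 1) * ∫⁻ t in I, w t * F t ^ p :=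
        lintegral_mul_rpow_le hp hw.aemeasurable hF
    _ ≤ ENNReal.ofReal (logWeight z) ^ (p - 1) * (C * besovEnergy p f) := by
        have weight : ∫⁻ t in I, w t ≤ ENNReal.ofReal (logWeight z) := by
          rw [lintegral_inv_one_sub (norm_nonneg z) hz]
          exact ENNReal.ofReal_le_ofReal (neg_log_one_sub_norm_le_logWeight hz)
        have radius := (lintegral_mono_set hI).trans (hC f hf ζ hζ)
        have : 0 ≤ p - 1 := by linarith
        gcongr

theorem exists_growth_bound (hp : 1 ≤ p) (K : ℝ≥0) :
    ∃ C : ℝ, ∀ f ∈ besovBall p K, ∀ z : ℂ, ‖z‖ < 1 → ‖f z‖ ≤ C * logWeight z ^ (1 - 1 / p) := by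
  obtain ⟨C, hC⟩ := exists_enorm_sub_rpow_le hp
  have hp0 : 0 < p := by linarith
  have hq : 0 ≤ 1 - 1 / p := sub_nonneg.2 ((div_le_one hp0).2 hp)
  have : 0 < Real.log 2 := Real.log_pos one_lt_two
  refine ⟨(C * K) ^ (1 / p) + K / Real.log 2 ^ (1 - 1 / p), fun f ⟨hf, center, energy⟩ z hz => ?_⟩
  have hL := logWeight_pos hz
  have increment : ‖f z - f 0‖ ≤ (C * K) ^ (1 / p) * logWeight z ^ (1 - 1 / p) := by
    have bound : ‖f z - f 0‖ₑ ^ p ≤ ENNReal.ofReal (logWeight z ^ (p - 1) * (C * K)) := by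
      refine (hC f hf z hz).trans ?_
      rw [ENNReal.ofReal_mul (by positivity), ENNReal.ofReal_rpow_of_pos hL,
        ENNReal.ofReal_mul C.coe_nonneg, ENNReal.ofReal_coe_nnreal, ENNReal.ofReal_coe_nnreal]
      gcongr
    rw [← ofReal_norm, ENNReal.ofReal_rpow_of_nonneg (norm_nonneg _) hp0.le,
      ENNReal.ofReal_le_ofReal_iff (by positivity),
      ← Real.le_rpow_inv_iff_of_pos (norm_nonneg _) (by positivity) hp0,
      Real.mul_rpow (by positivity) (by positivity), ← Real.rpow_mul hL.le, mul_comm] at bound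
    convert bound using 3
    · rw [one_div]
    · field_simp
  have constant : ‖f 0‖ ≤ K / Real.log 2 ^ (1 - 1 / p) * logWeight z ^ (1 - 1 / p) := by
    rw [div_mul_eq_mul_div, le_div_iff₀ (by positivity)]
    gcongr
    exact log_two_le_logWeight hz
  calc ‖f z‖ = ‖(f z - f 0) + f 0‖ := by rw [sub_add_cancel]
    _ ≤ ‖f z - f 0‖ + ‖f 0‖ := norm_add_le _ _
    _ ≤ _ := by rw [add_mul]; gcongr

end Growth

section Multiplication

variable {p : ℝ} {g f : ℂ → ℂ} {z : ℂ}

theorem deriv_Mg (hg : HolOn g) (hf : HolOn f) (hz : ‖z‖ < 1) :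
    deriv (Mg g f) z = deriv g z * f z + g z * deriv f z :=
  deriv_fun_mul (hg.differentiableAt hz) (hf.differentiableAt hz)

theorem mapsInto_Mg_of_mem_Hinf_inter_blochLog (hp : 1 ≤ p)
    (hg : g ∈ Hinf ∩ BlochLog (1 - 1 / p)) : MapsInto (Mg g) (Besov p) Bloch := by
  obtain ⟨⟨hol, M, bounded⟩, -, N, logBloch⟩ := hg
  intro f hf
  obtain ⟨K, hK⟩ := exists_mem_besovBall (by linarith) hf
  obtain ⟨A, growth⟩ := exists_growth_bound hp K
  obtain ⟨B, bloch⟩ := exists_bloch_bound hp K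
  refine ⟨hol.mul hK.1, N * A + M * B, fun z hz => ?_⟩
  have hz' := mem_ball_zero_iff.1 hz
  have weight : 0 < 1 - ‖z‖ ^ 2 := by nlinarith [norm_nonneg z]
  have hg := bounded z hz
  have hM : 0 ≤ M := (norm_nonneg _).trans hg
  have hA : 0 ≤ A := nonneg_of_mul_nonneg_left ((norm_nonneg _).trans (growth f hK z hz'))
    (Real.rpow_pos_of_pos (logWeight_pos hz') _)
  calc (1 - ‖z‖ ^ 2) * ‖deriv (Mg g f) z‖
      ≤ (1 - ‖z‖ ^ 2) * (‖deriv g z‖ * ‖f z‖ + ‖g z‖ * ‖deriv f z‖) := by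
        rw [deriv_Mg hol hK.1 hz', ← norm_mul, ← norm_mul]
        gcongr
        exact norm_add_le _ _
    _ ≤ (1 - ‖z‖ ^ 2) * (‖deriv g z‖ * (A * logWeight z ^ (1 - 1 / p)) + M * ‖deriv f z‖) := by
        gcongr
        exact growth f hK z hz'
    _ = (1 - ‖z‖ ^ 2) * logWeight z ^ (1 - 1 / p) * ‖deriv g z‖ * A
          + M * ((1 - ‖z‖ ^ 2) * ‖deriv f z‖) := by ring
    _ ≤ N * A + M * B := by
        gcongr
        exacts [logBloch z hz, bloch f hK z hz']

end Multiplication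

section UniformBoundedness

/-- The uniform boundedness principle for functionals on `ℓ¹`, stated through coefficients. -/
theorem exists_norm_le_of_forall_summable {𝕜 ι κ : Type*} [RCLike 𝕜] {a : κ → ι → 𝕜}
    (row : ∀ k, ∃ A : ℝ, ∀ i, ‖a k i‖ ≤ A)
    (h : ∀ c : ι → 𝕜, (Summable fun i => ‖c i‖) → ∃ B : ℝ, ∀ k, ‖∑' i, c i * a k i‖ ≤ B) :
    ∃ B : ℝ, ∀ k i, ‖a k i‖ ≤ B := by
  classical
  have memℓp (k) : Memℓp (a k) ∞ := memℓp_infty <| by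
    obtain ⟨A, hA⟩ := row k
    exact ⟨A, forall_mem_range.2 hA⟩
  let pairing : lp (fun _ : ι => 𝕜) 1 →L[𝕜] lp (fun _ : ι => 𝕜) ∞ →L[𝕜] 𝕜 :=
    lp.dualPairing 1 ∞ (fun _ => ContinuousLinearMap.mul 𝕜 𝕜) (K := 1) fun _ => by simp
  let T (k : κ) := pairing.flip ⟨a k, memℓp k⟩
  have T_apply (k) (c : lp (fun _ : ι => 𝕜) 1) : T k c = ∑' i, c i * a k i := rfl
  obtain ⟨B, hB⟩ := banach_steinhaus (g := T) fun c => by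
    simpa only [T_apply] using h c (by simpa using (lp.memℓp c).summable (by simp))
  refine ⟨B, fun k i => ?_⟩
  have T_single : T k (lp.single 1 i 1) = a k i := by
    rw [T_apply, tsum_eq_single i fun j hj => by simp [hj], lp.single_apply_self, one_mul]
  simpa [T_single, lp.norm_single] using ((T k).le_of_opNorm_le (hB k) (lp.single 1 i 1))

end UniformBoundedness

section Series

variable {p r : ℝ} {K : ℝ≥0} {F : ℕ → ℂ → ℂ} {c : ℕ → ℂ} {z : ℂ} {g : ℂ → ℂ}

theorem exists_norm_le_of_mem_besovBall (hp : 1 ≤ p) (K : ℝ≥0) (hr : r < 1) :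
    ∃ B : ℝ, ∀ f ∈ besovBall p K, ∀ z ∈ ball (0 : ℂ) r, ‖f z‖ ≤ B := by
  obtain ⟨C, hC⟩ := exists_growth_bound hp K
  refine ⟨|C| * logWeight r ^ (1 - 1 / p), fun f hf z hz => ?_⟩
  have hz' : ‖z‖ < |r| := (mem_ball_zero_iff.1 hz).trans_le (le_abs_self r)
  have hr' : |r| < 1 := abs_lt.2 ⟨by linarith [norm_nonneg z, mem_ball_zero_iff.1 hz], hr⟩
  have hz1 := hz'.trans hr'
  have := logWeight_pos hz1
  have hrr : ‖(r : ℂ)‖ = |r| := Complex.norm_real r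
  have monotone : logWeight z ≤ logWeight r := by
    have : 0 < 1 - |r| ^ 2 := by nlinarith [abs_nonneg r]
    have : ‖z‖ ^ 2 ≤ |r| ^ 2 := by gcongr
    unfold logWeight
    rw [hrr]
    have : 0 < 1 - ‖z‖ ^ 2 := by linarith
    gcongr
  calc ‖f z‖ ≤ C * logWeight z ^ (1 - 1 / p) := hC f hf z hz1
    _ ≤ |C| * logWeight r ^ (1 - 1 / p) := by
        have : 0 ≤ 1 - 1 / p := sub_nonneg.2 ((div_le_one (by linarith)).2 hp)
        gcongr
        exact le_abs_self C

theorem exists_summable_bound_of_mem_besovBall (hp : 1 ≤ p) (hF : ∀ n, F n ∈ besovBall p K)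
    (hc : Summable fun n => ‖c n‖) (hr : r < 1) :
    ∃ B : ℕ → ℝ, Summable B ∧ ∀ n, ∀ z ∈ ball (0 : ℂ) r, ‖c n * F n z‖ ≤ B n := by
  obtain ⟨B, hB⟩ := exists_norm_le_of_mem_besovBall hp K hr
  refine ⟨fun n => ‖c n‖ * B, hc.mul_right B, fun n z hz => ?_⟩
  rw [norm_mul]
  exact mul_le_mul_of_nonneg_left (hB _ (hF n) z hz) (norm_nonneg _)

theorem summable_mul_of_mem_besovBall (hp : 1 ≤ p) (hF : ∀ n, F n ∈ besovBall p K)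
    (hc : Summable fun n => ‖c n‖) (hz : ‖z‖ < 1) : Summable fun n => c n * F n z := by
  obtain ⟨r, hzr, hr⟩ := exists_between hz
  obtain ⟨B, hB, bound⟩ := exists_summable_bound_of_mem_besovBall hp hF hc hr
  exact hB.of_norm_bounded fun n => bound n z (mem_ball_zero_iff.2 hzr)

theorem differentiableOn_ball_mul_of_mem_besovBall (hF : ∀ n, F n ∈ besovBall p K) (hr : r < 1)
    (n : ℕ) : DifferentiableOn ℂ (fun z => c n * F n z) (ball 0 r) :=
  ((hF n).1.mono (ball_subset_ball hr.le)).const_mul (c n)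

theorem holOn_tsum_of_mem_besovBall (hp : 1 ≤ p) (hF : ∀ n, F n ∈ besovBall p K)
    (hc : Summable fun n => ‖c n‖) : HolOn fun z => ∑' n, c n * F n z := fun z hz => by
  obtain ⟨r, hzr, hr⟩ := exists_between (mem_ball_zero_iff.1 hz)
  obtain ⟨B, hB, bound⟩ := exists_summable_bound_of_mem_besovBall hp hF hc hr
  have := differentiableOn_tsum_of_summable_norm hB
    (differentiableOn_ball_mul_of_mem_besovBall hF hr) isOpen_ball bound
  exact (this.differentiableAt
    (isOpen_ball.mem_nhds (mem_ball_zero_iff.2 hzr))).differentiableWithinAt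

theorem hasSum_deriv_of_mem_besovBall (hp : 1 ≤ p) (hF : ∀ n, F n ∈ besovBall p K)
    (hc : Summable fun n => ‖c n‖) (hz : ‖z‖ < 1) :
    HasSum (fun n => c n * deriv (F n) z) (deriv (fun z => ∑' n, c n * F n z) z) := by
  obtain ⟨r, hzr, hr⟩ := exists_between hz
  obtain ⟨B, hB, bound⟩ := exists_summable_bound_of_mem_besovBall hp hF hc hr
  have := hasSum_deriv_of_summable_norm hB
    (differentiableOn_ball_mul_of_mem_besovBall hF hr) isOpen_ball bound
    (mem_ball_zero_iff.2 hzr)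
  simpa only [deriv_const_mul _ ((hF _).1.differentiableAt hz)] using this

theorem besovDensity_tsum_le (hp : 1 ≤ p) (hF : ∀ n, F n ∈ besovBall p K)
    (hc : Summable fun n => ‖c n‖) (hz : ‖z‖ < 1) :
    besovDensity p (fun z => ∑' n, c n * F n z) z ≤
      (∑' n, ‖c n‖ₑ) ^ (p - 1) * ∑' n, ‖c n‖ₑ * besovDensity p (F n) z := by
  have triangle : ‖deriv (fun z => ∑' n, c n * F n z) z‖ₑ ≤ ∑' n, ‖c n‖ₑ * ‖deriv (F n) z‖ₑ := by
    rw [← (hasSum_deriv_of_mem_besovBall hp hF hc hz).tsum_eq]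
    simpa only [enorm_mul] using enorm_tsum_le_tsum_enorm (f := fun n => c n * deriv (F n) z)
  have jensen : (∑' n, ‖c n‖ₑ * ‖deriv (F n) z‖ₑ) ^ p ≤
      (∑' n, ‖c n‖ₑ) ^ (p - 1) * ∑' n, ‖c n‖ₑ * ‖deriv (F n) z‖ₑ ^ p := by
    simpa only [lintegral_count] using lintegral_mul_rpow_le (μ := Measure.count) hp
      (w := fun n => ‖c n‖ₑ) (f := fun n => ‖deriv (F n) z‖ₑ)
      measurable_from_top.aemeasurable measurable_from_top.aemeasurable
  calc _ ≤ ENNReal.ofReal ((1 - ‖z‖) ^ (p - 2)) *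
        ((∑' n, ‖c n‖ₑ) ^ (p - 1) * ∑' n, ‖c n‖ₑ * ‖deriv (F n) z‖ₑ ^ p) := by
        exact mul_le_mul_right ((ENNReal.rpow_le_rpow triangle (by linarith)).trans jensen) _
    _ = _ := by
        simp only [besovDensity, mul_left_comm _ (ENNReal.ofReal _), ENNReal.tsum_mul_left]

theorem tsum_mem_besov (hp : 1 ≤ p) (hF : ∀ n, F n ∈ besovBall p K)
    (hc : Summable fun n => ‖c n‖) : (fun z => ∑' n, c n * F n z) ∈ Besov p := by
  refine (mem_besov_iff (by linarith)).2 ⟨holOn_tsum_of_mem_besovBall hp hF hc, ?_⟩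
  have mass : ∑' n, ‖c n‖ₑ ≠ ⊤ := tsum_enorm_ne_top_iff_summable_norm.2 hc
  have energies : ∑' n, ‖c n‖ₑ * besovEnergy p (F n) ≤ (∑' n, ‖c n‖ₑ) * K := by
    rw [← ENNReal.tsum_mul_right]
    gcongr with n
    exact (hF n).2.2
  calc besovEnergy p (fun z => ∑' n, c n * F n z)
      ≤ ∫⁻ z in ball 0 1,
          (∑' n, ‖c n‖ₑ) ^ (p - 1) * ∑' n, ‖c n‖ₑ * besovDensity p (F n) z :=
        setLIntegral_mono' measurableSet_ball fun z hz =>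
          besovDensity_tsum_le hp hF hc (mem_ball_zero_iff.1 hz)
    _ = (∑' n, ‖c n‖ₑ) ^ (p - 1) * ∑' n, ‖c n‖ₑ * besovEnergy p (F n) := by
        have measurable (n) := aemeasurable_besovDensity (p := p) (hF n).1
        rw [lintegral_const_mul' _ _ (by finiteness),
          lintegral_tsum fun n => (measurable n).const_mul _]
        simp only [lintegral_const_mul' _ _ enorm_ne_top, besovEnergy]
    _ ≤ (∑' n, ‖c n‖ₑ) ^ (p - 1) * ((∑' n, ‖c n‖ₑ) * K) := by gcongr
    _ < ⊤ := by finiteness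

theorem hasSum_deriv_Mg_of_mem_besovBall (hp : 1 ≤ p) (hg : HolOn g)
    (hF : ∀ n, F n ∈ besovBall p K) (hc : Summable fun n => ‖c n‖) (hz : ‖z‖ < 1) :
    HasSum (fun n => c n * deriv (Mg g (F n)) z)
      (deriv (Mg g fun z => ∑' n, c n * F n z) z) := by
  rw [deriv_Mg hg (holOn_tsum_of_mem_besovBall hp hF hc) hz]
  refine (((summable_mul_of_mem_besovBall hp hF hc hz).hasSum.mul_left (deriv g z)).add
    ((hasSum_deriv_of_mem_besovBall hp hF hc hz).mul_left (g z))).congr_fun fun n => ?_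
  rw [deriv_Mg hg (hF n).1 hz]
  ring

theorem exists_norm_deriv_Mg_le (hp : 1 ≤ p) (hg : HolOn g) (K : ℝ≥0) (hz : ‖z‖ < 1) :
    ∃ A : ℝ, ∀ f ∈ besovBall p K, ‖deriv (Mg g f) z‖ ≤ A := by
  obtain ⟨C, growth⟩ := exists_growth_bound hp K
  obtain ⟨D, bloch⟩ := exists_bloch_bound hp K
  have weight : 0 < 1 - ‖z‖ ^ 2 := by nlinarith [norm_nonneg z]
  refine ⟨‖deriv g z‖ * (C * logWeight z ^ (1 - 1 / p)) + ‖g z‖ * (D / (1 - ‖z‖ ^ 2)),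
    fun f hf => ?_⟩
  rw [deriv_Mg hg hf.1 hz]
  refine (norm_add_le _ _).trans ?_
  rw [norm_mul, norm_mul]
  gcongr
  · exact growth f hf z hz
  · rw [le_div_iff₀' weight]
    exact bloch f hf z hz

theorem exists_bloch_bound_Mg (hp : 1 ≤ p) (hg : HolOn g)
    (hmap : MapsInto (Mg g) (Besov p) Bloch) (K : ℝ≥0) :
    ∃ C : ℝ, ∀ f ∈ besovBall p K, ∀ z : ℂ, ‖z‖ < 1 →
      (1 - ‖z‖ ^ 2) * ‖deriv (Mg g f) z‖ ≤ C := by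
  by_contra! unbounded
  choose F hF z hz large using fun n : ℕ => unbounded n
  have weight (n) : 0 ≤ 1 - ‖z n‖ ^ 2 := by nlinarith [norm_nonneg (z n), hz n]
  have norm_eq (k) (w : ℂ) :
      ‖((1 - ‖z k‖ ^ 2 : ℝ) : ℂ) * w‖ = (1 - ‖z k‖ ^ 2) * ‖w‖ := by
    rw [norm_mul, Complex.norm_real, Real.norm_of_nonneg (weight k)]
  obtain ⟨B, hB⟩ := exists_norm_le_of_forall_summable
    (a := fun k n => ((1 - ‖z k‖ ^ 2 : ℝ) : ℂ) * deriv (Mg g (F n)) (z k))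
    (fun k => by
      obtain ⟨A, hA⟩ := exists_norm_deriv_Mg_le hp hg K (hz k)
      refine ⟨(1 - ‖z k‖ ^ 2) * A, fun n => ?_⟩
      rw [norm_eq]
      exact mul_le_mul_of_nonneg_left (hA _ (hF n)) (weight k))
    (fun c hc => by
      obtain ⟨-, B, hB⟩ := hmap _ (tsum_mem_besov hp hF hc)
      refine ⟨B, fun k => ?_⟩
      simp only [mul_left_comm (c _), tsum_mul_left,
        (hasSum_deriv_Mg_of_mem_besovBall hp hg hF hc (hz k)).tsum_eq, norm_eq]
      exact hB _ (mem_ball_zero_iff.2 (hz k)))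
  obtain ⟨n, hn⟩ := exists_nat_gt B
  have := hB n n
  rw [norm_eq] at this
  linarith [large n]

end Series

section KernelIntegrals

theorem setLIntegral_Ioo_neg_comp_abs (f : ℝ → ℝ≥0∞) (R : ℝ) :
    ∫⁻ x in Ioo (-R) R, f |x| = 2 * ∫⁻ x in Ioo 0 R, f x := by
  have right : ∫⁻ x in Ioo (-R) R ∩ Ioi 0, f |x| = ∫⁻ x in Ioo 0 R, f x := by
    have : Ioo (-R) R ∩ Ioi 0 = Ioo 0 R := by ext x; grind
    rw [this]
    exact setLIntegral_congr_fun measurableSet_Ioo fun x hx => by rw [abs_of_pos hx.1]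
  have left : ∫⁻ x in Ioo (-R) R \ Ioi 0, f |x| = ∫⁻ x in Ioo 0 R, f x := by
    have halfOpen : Ioo (-R) R \ Ioi 0 = Ioc (-R) 0 := by ext x; grind
    calc ∫⁻ x in Ioo (-R) R \ Ioi 0, f |x| = ∫⁻ x in Ioo (-R) 0, f |x| := by
          rw [halfOpen, setLIntegral_congr Ioo_ae_eq_Ioc]
      _ = ∫⁻ x in Neg.neg ⁻¹' Ioo 0 R, f (-x) := by
          rw [neg_preimage, neg_Ioo, neg_zero]
          exact setLIntegral_congr_fun measurableSet_Ioo fun x hx => by rw [abs_of_neg hx.2]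
      _ = _ := (Measure.measurePreserving_neg volume).setLIntegral_comp_preimage_emb
          (MeasurableEquiv.neg ℝ).measurableEmbedding _ _
  rw [← lintegral_inter_add_sdiff _ _ measurableSet_Ioi, right, left, two_mul]

theorem one_sub_add_abs_le_norm_one_sub_circleMap {a θ : ℝ} (ha0 : 0 ≤ a) (ha : a ≤ 1)
    (hθ : |θ| ≤ π) : 1 - a + |θ| ≤ (1 + π) * ‖1 - circleMap 0 a θ‖ := by
  have radial : 1 - a ≤ ‖1 - circleMap 0 a θ‖ := by
    simpa [abs_of_nonneg ha0] using norm_sub_norm_le 1 (circleMap 0 a θ)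
  have chord : ‖1 - circleMap 0 1 θ‖ ≤ 2 * ‖1 - circleMap 0 a θ‖ := by
    have gap : ‖circleMap 0 1 θ - circleMap 0 a θ‖ = 1 - a := by
      rw [circleMap_zero, circleMap_zero, ← sub_mul, norm_mul, norm_exp_ofReal_mul_I, mul_one,
        ← ofReal_sub, Complex.norm_real, Real.norm_of_nonneg (by linarith)]
    have := norm_sub_le (1 - circleMap 0 a θ) (circleMap 0 1 θ - circleMap 0 a θ)
    rw [sub_sub_sub_cancel_right] at this
    linarith
  have arc : 2 * |θ| ≤ π * ‖1 - circleMap 0 1 θ‖ := by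
    have jordan := Real.mul_abs_le_abs_sin (x := θ / 2) (by
      rw [abs_div, abs_two]; linarith)
    rw [norm_sub_rev, circleMap_zero, ofReal_one, one_mul, mul_comm (θ : ℂ),
      norm_exp_I_mul_ofReal_sub_one, norm_mul, Real.norm_eq_abs, Real.norm_eq_abs, abs_two]
    rw [abs_div, abs_two, div_mul_eq_mul_div, div_le_iff₀ Real.pi_pos] at jordan
    linarith
  nlinarith [Real.pi_pos]

variable {p q a : ℝ}

theorem lintegral_add_abs_rpow_le {δ : ℝ} (hq : 1 < q) (hδ : 0 < δ) :
    ∫⁻ θ in Ioo (-π) π, ENNReal.ofReal ((δ + |θ|) ^ (-q)) ≤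
      ENNReal.ofReal (2 / (q - 1) * δ ^ (1 - q)) := by
  have base_pos {θ : ℝ} (hθ : 0 ≤ θ) : 0 < δ + θ := by linarith
  have hq' : 0 < q - 1 := by linarith
  rw [setLIntegral_Ioo_neg_comp_abs (fun θ => ENNReal.ofReal ((δ + θ) ^ (-q))),
    lintegral_Ioo_ofReal_of_hasDerivAt (G := fun θ => -((δ + θ) ^ (1 - q) / (q - 1)))
      Real.pi_nonneg]
  · rw [add_zero, neg_sub_neg, ← ENNReal.ofReal_ofNat 2, ← ENNReal.ofReal_mul zero_le_two]
    refine ENNReal.ofReal_le_ofReal ?_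
    have := base_pos Real.pi_nonneg
    have : 0 ≤ (δ + π) ^ (1 - q) / (q - 1) := by positivity
    linarith [show 2 / (q - 1) * δ ^ (1 - q) = 2 * (δ ^ (1 - q) / (q - 1)) by ring]
  · refine ((ContinuousOn.rpow_const (by fun_prop) fun θ hθ => ?_).div_const _).neg
    exact Or.inl (base_pos hθ.1).ne'
  · intro θ hθ
    have power := ((hasDerivAt_id θ).const_add δ).rpow_const (p := 1 - q)
      (Or.inl (base_pos hθ.1.le).ne')
    refine (power.div_const (q - 1)).neg.congr_deriv ?_
    rw [show 1 - q - 1 = -q by ring, id]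
    field_simp
    ring
  · intro θ hθ
    have := base_pos hθ.1.le
    positivity

theorem exists_lintegral_circleMap_kernel_le (hq : 1 < q) :
    ∃ C : ℝ≥0, ∀ a : ℝ, 0 ≤ a → a < 1 →
      ∫⁻ θ in Ioo (-π) π, ‖1 - circleMap 0 a θ‖ₑ ^ (-q) ≤
        C * ENNReal.ofReal ((1 - a) ^ (1 - q)) := by
  have : 0 < q - 1 := by linarith
  refine ⟨((1 + π) ^ q * (2 / (q - 1))).toNNReal, fun a ha0 ha => ?_⟩
  have ha' : 0 < 1 - a := by linarith
  have pointwise : ∀ θ ∈ Ioo (-π) π, ‖1 - circleMap 0 a θ‖ₑ ^ (-q) ≤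
      ENNReal.ofReal ((1 + π) ^ q) * ENNReal.ofReal ((1 - a + |θ|) ^ (-q)) := fun θ hθ => by
    have lower := one_sub_add_abs_le_norm_one_sub_circleMap ha0 ha.le (abs_le.2 ⟨hθ.1.le, hθ.2.le⟩)
    have base : 0 < 1 - a + |θ| := by positivity
    have kernel : 0 < ‖1 - circleMap 0 a θ‖ :=
      pos_of_mul_pos_right (base.trans_le lower) (by positivity)
    rw [← ofReal_norm, ENNReal.ofReal_rpow_of_pos kernel, ← ENNReal.ofReal_mul (by positivity)]
    refine ENNReal.ofReal_le_ofReal ?_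
    have := Real.rpow_le_rpow_of_nonpos base lower (by linarith : -q ≤ 0)
    rw [Real.mul_rpow (by positivity) kernel.le, Real.rpow_neg (by positivity)] at this
    rwa [← inv_mul_le_iff₀ (by positivity)]
  calc _ ≤ ENNReal.ofReal ((1 + π) ^ q) *
        ∫⁻ θ in Ioo (-π) π, ENNReal.ofReal ((1 - a + |θ|) ^ (-q)) := by
        rw [← lintegral_const_mul' _ _ ENNReal.ofReal_ne_top]
        exact setLIntegral_mono' measurableSet_Ioo pointwise
    _ ≤ ENNReal.ofReal ((1 + π) ^ q) * ENNReal.ofReal (2 / (q - 1) * (1 - a) ^ (1 - q)) := by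
        gcongr
        exact lintegral_add_abs_rpow_le hq ha'
    _ = _ := by
        rw [ENNReal.ofReal_mul (by positivity), ← mul_assoc, ← ENNReal.ofReal_mul (by positivity)]
        rfl

theorem setLIntegral_ball_comp_mul_left {c : ℂ} (hc : ‖c‖ = 1) (G : ℂ → ℝ≥0∞) (R : ℝ) :
    ∫⁻ z in ball 0 R, G (c * z) = ∫⁻ z in ball 0 R, G z := by
  obtain ⟨u, rfl⟩ : ∃ u : Circle, c = u := ⟨⟨c, mem_sphere_zero_iff_norm.2 hc⟩, rfl⟩
  have change := (rotation u).measurePreserving.setLIntegral_comp_preimage_emb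
    (rotation u).toHomeomorph.measurableEmbedding G (ball 0 R)
  simpa only [LinearIsometryEquiv.preimage_ball, map_zero, rotation_apply] using change

theorem exists_lintegral_kernel_le (hq : 1 < q) :
    ∃ C : ℝ≥0, ∀ (s : ℝ) (w : ℂ), ‖w‖ < 1 →
      ∫⁻ z in ball 0 1, ENNReal.ofReal ((1 - ‖z‖) ^ s) * ‖1 - conj w * z‖ₑ ^ (-q) ≤
        C * ∫⁻ r in Ioo (0 : ℝ) 1, ENNReal.ofReal ((1 - r) ^ s * (1 - ‖w‖ * r) ^ (1 - q)) := by
  obtain ⟨C, hC⟩ := exists_lintegral_circleMap_kernel_le hq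
  refine ⟨C, fun s w hw => ?_⟩
  obtain ⟨c, hc, hcw⟩ : ∃ c : ℂ, ‖c‖ = 1 ∧ c * (‖w‖ : ℂ) = conj w := by
    simpa using RCLike.exists_norm_mul_eq_self (conj w)
  have measurable : Measurable fun z : ℂ =>
      ENNReal.ofReal ((1 - ‖z‖) ^ s) * ‖1 - (‖w‖ : ℂ) * z‖ₑ ^ (-q) := by fun_prop
  calc ∫⁻ z in ball 0 1, ENNReal.ofReal ((1 - ‖z‖) ^ s) * ‖1 - conj w * z‖ₑ ^ (-q)
      = ∫⁻ z in ball 0 1, ENNReal.ofReal ((1 - ‖z‖) ^ s) * ‖1 - (‖w‖ : ℂ) * z‖ₑ ^ (-q) := by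
        rw [← setLIntegral_ball_comp_mul_left hc (fun z => ENNReal.ofReal ((1 - ‖z‖) ^ s) *
          ‖1 - (‖w‖ : ℂ) * z‖ₑ ^ (-q))]
        simp only [norm_mul, hc, one_mul, ← mul_assoc, mul_comm _ c, hcw]
    _ = ∫⁻ r in Ioo (0 : ℝ) 1, ENNReal.ofReal r * ENNReal.ofReal ((1 - r) ^ s) *
          ∫⁻ θ in Ioo (-π) π, ‖1 - circleMap 0 (‖w‖ * r) θ‖ₑ ^ (-q) := by
        rw [setLIntegral_ball_eq_circleMap measurable]
        refine setLIntegral_congr_fun measurableSet_Ioo fun r hr => ?_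
        simp only [norm_circleMap_zero, abs_of_pos hr.1, ← mul_assoc]
        rw [lintegral_const_mul' _ _ (by finiteness)]
        simp [circleMap_zero, mul_assoc]
    _ ≤ ∫⁻ r in Ioo (0 : ℝ) 1,
          C * ENNReal.ofReal ((1 - r) ^ s * (1 - ‖w‖ * r) ^ (1 - q)) := by
        refine setLIntegral_mono' measurableSet_Ioo fun r hr => ?_
        have hr' : 0 ≤ 1 - r := by linarith [hr.2]
        have hwr : ‖w‖ * r < 1 := by nlinarith [hr.1, hr.2, norm_nonneg w]
        calc _ ≤ 1 * ENNReal.ofReal ((1 - r) ^ s) *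
              (C * ENNReal.ofReal ((1 - ‖w‖ * r) ^ (1 - q))) := by
              gcongr
              · exact ENNReal.ofReal_le_one.2 hr.2.le
              · exact hC _ (mul_nonneg (norm_nonneg w) hr.1.le) hwr
          _ = _ := by rw [ENNReal.ofReal_mul (by positivity)]; ring
    _ = _ := lintegral_const_mul' _ _ (by finiteness)

theorem hasDerivAt_one_sub_div_one_sub_mul_rpow {r : ℝ} (ha0 : 0 ≤ a) (ha : a < 1)
    (hr : r ∈ Ioo (0 : ℝ) 1) (s : ℝ) :
    HasDerivAt (fun r => ((1 - r) / (1 - a * r)) ^ s)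
      (-(s * (1 - a)) * ((1 - r) ^ (s - 1) * (1 - a * r) ^ (-s - 1))) r := by
  have num : 0 < 1 - r := by linarith [hr.2]
  have den : 0 < 1 - a * r := by nlinarith [hr.1, hr.2]
  have quotient := ((hasDerivAt_id r).const_sub 1).div
    (((hasDerivAt_id r).const_mul a).const_sub 1) den.ne'
  refine (quotient.rpow_const (p := s) (Or.inl (div_pos num den).ne')).congr_deriv ?_
  simp only [id, Pi.div_apply]
  rw [Real.div_rpow num.le den.le, show -s - 1 = -(s - 1) - 2 by ring, Real.rpow_sub den _ 2,
    Real.rpow_neg den.le, Real.rpow_two]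
  field_simp
  ring

theorem continuousOn_one_sub_div_one_sub_mul_rpow {s : ℝ} (hs : 0 ≤ s) (ha0 : 0 ≤ a) (ha : a < 1) :
    ContinuousOn (fun r => ((1 - r) / (1 - a * r)) ^ s) (Icc 0 1) := by
  refine ContinuousOn.rpow_const (ContinuousOn.div (by fun_prop) (by fun_prop) fun r hr => ?_)
    fun _ _ => Or.inr hs
  nlinarith [hr.1, hr.2]

theorem lintegral_one_sub_rpow_mul_one_sub_mul_rpow_neg (hp : 1 < p) (ha0 : 0 ≤ a) (ha : a < 1) :
    ∫⁻ r in Ioo (0 : ℝ) 1, ENNReal.ofReal ((1 - r) ^ (p - 2) * (1 - a * r) ^ (-p)) =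
      ENNReal.ofReal (1 / ((p - 1) * (1 - a))) := by
  have hp' : 0 < p - 1 := by linarith
  have ha' : 0 < 1 - a := by linarith
  rw [lintegral_Ioo_ofReal_of_hasDerivAt
    (G := fun r => -1 / ((p - 1) * (1 - a)) * ((1 - r) / (1 - a * r)) ^ (p - 1)) zero_le_one]
  · simp [Real.zero_rpow hp'.ne', neg_div]
  · exact (continuousOn_one_sub_div_one_sub_mul_rpow hp'.le ha0 ha).const_mul _
  · intro r hr
    refine ((hasDerivAt_one_sub_div_one_sub_mul_rpow ha0 ha hr (p - 1)).const_mul _).congr_deriv ?_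
    rw [show p - 1 - 1 = p - 2 by ring, show -(p - 1) - 1 = -p by ring]
    field_simp
  · intro r hr
    have num : 0 < 1 - r := by linarith [hr.2]
    have den : 0 < 1 - a * r := by nlinarith [hr.1, hr.2]
    positivity

theorem one_sub_rpow_mul_one_sub_mul_rpow_le {r : ℝ} (hp : 1 ≤ p) (ha0 : 0 ≤ a) (ha : a < 1)
    (hr : r ∈ Ioo (0 : ℝ) 1) :
    (1 - r) ^ (p - 2) * (1 - a * r) ^ (1 - p) ≤
      (1 - a) * ((1 - r) ^ (p - 2) * (1 - a * r) ^ (-p)) + a * (1 - a * r)⁻¹ := by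
  have num : 0 < 1 - r := by linarith [hr.2]
  have den : 0 < 1 - a * r := by nlinarith [hr.1, hr.2]
  have le : 1 - r ≤ 1 - a * r := by nlinarith [hr.1]
  have numerator : (1 - r) ^ (p - 1) = (1 - r) ^ (p - 2) * (1 - r) := by
    rw [← Real.rpow_add_one num.ne']; ring_nf
  have bound : (1 - r) ^ (p - 1) * (1 - a * r) ^ (-p) ≤ (1 - a * r)⁻¹ := by
    calc _ ≤ (1 - a * r) ^ (p - 1) * (1 - a * r) ^ (-p) := by
          gcongr
      _ = _ := by rw [← Real.rpow_add den, ← Real.rpow_neg_one]; ring_nf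
  calc (1 - r) ^ (p - 2) * (1 - a * r) ^ (1 - p)
      = (1 - r) ^ (p - 2) * ((1 - a * r) ^ (-p) * (1 - a * r)) := by
        rw [← Real.rpow_add_one den.ne']; ring_nf
    _ = (1 - a) * ((1 - r) ^ (p - 2) * (1 - a * r) ^ (-p)) +
          a * ((1 - r) ^ (p - 1) * (1 - a * r) ^ (-p)) := by rw [numerator]; ring
    _ ≤ _ := by gcongr

theorem lintegral_one_sub_rpow_mul_one_sub_mul_rpow_le (hp : 1 < p) (ha0 : 0 ≤ a) (ha : a < 1) :
    ∫⁻ r in Ioo (0 : ℝ) 1, ENNReal.ofReal ((1 - r) ^ (p - 2) * (1 - a * r) ^ (1 - p)) ≤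
      ENNReal.ofReal (1 / (p - 1) - Real.log (1 - a)) := by
  have hp' : 0 < p - 1 := by linarith
  have den {r : ℝ} (hr : r ∈ Icc (0 : ℝ) 1) : 0 < 1 - a * r := by nlinarith [hr.1, hr.2]
  calc _ ≤ ∫⁻ r in Ioo (0 : ℝ) 1, ENNReal.ofReal
        ((1 - a) * ((1 - r) ^ (p - 2) * (1 - a * r) ^ (-p)) + a * (1 - a * r)⁻¹) :=
        setLIntegral_mono' measurableSet_Ioo fun r hr =>
          ENNReal.ofReal_le_ofReal (one_sub_rpow_mul_one_sub_mul_rpow_le hp.le ha0 ha hr)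
    _ = ENNReal.ofReal (1 / (p - 1) - Real.log (1 - a)) := by
        rw [lintegral_Ioo_ofReal_of_hasDerivAt (G := fun r =>
          -1 / (p - 1) * ((1 - r) / (1 - a * r)) ^ (p - 1) - Real.log (1 - a * r)) zero_le_one]
        · simp [Real.zero_rpow hp'.ne', neg_div, neg_add_eq_sub]
        · exact ((continuousOn_one_sub_div_one_sub_mul_rpow hp'.le ha0 ha).const_mul _).sub
            (ContinuousOn.log (by fun_prop) fun r hr => (den hr).ne')
        · intro r hr
          have logarithm := (((hasDerivAt_id r).const_mul a).const_sub 1).log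
            (den (Ioo_subset_Icc_self hr)).ne'
          refine (((hasDerivAt_one_sub_div_one_sub_mul_rpow ha0 ha hr (p - 1)).const_mul _).sub
            logarithm).congr_deriv ?_
          rw [show p - 1 - 1 = p - 2 by ring, show -(p - 1) - 1 = -p by ring, id]
          field_simp
          ring
        · intro r hr
          have := den (Ioo_subset_Icc_self hr)
          have num : 0 < 1 - r := by linarith [hr.2]
          have : 0 < 1 - a := by linarith
          positivity

theorem lintegral_one_sub_rpow_mul_one_sub_mul_rpow_two_mul_le (hp : 1 < p) (ha0 : 0 ≤ a)
    (ha : a < 1) :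
    ∫⁻ r in Ioo (0 : ℝ) 1, ENNReal.ofReal ((1 - r) ^ (p - 2) * (1 - a * r) ^ (1 - 2 * p)) ≤
      ENNReal.ofReal ((1 - a) ^ (-p) / (p - 1)) := by
  have hp' : 0 < p - 1 := by linarith
  have ha' : 0 < 1 - a := by linarith
  have pointwise : ∀ r ∈ Ioo (0 : ℝ) 1, (1 - r) ^ (p - 2) * (1 - a * r) ^ (1 - 2 * p) ≤
      (1 - a) ^ (1 - p) * ((1 - r) ^ (p - 2) * (1 - a * r) ^ (-p)) := fun r hr => by
    have num : 0 < 1 - r := by linarith [hr.2]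
    have den : 1 - a ≤ 1 - a * r := by nlinarith [hr.2]
    rw [show 1 - 2 * p = 1 - p + -p by ring, Real.rpow_add (ha'.trans_le den), mul_left_comm]
    have := ha'.trans_le den
    gcongr ?_ * _
    exact Real.rpow_le_rpow_of_nonpos ha' den (by linarith)
  calc _ ≤ ∫⁻ r in Ioo (0 : ℝ) 1, ENNReal.ofReal ((1 - a) ^ (1 - p)) *
        ENNReal.ofReal ((1 - r) ^ (p - 2) * (1 - a * r) ^ (-p)) := by
        refine setLIntegral_mono' measurableSet_Ioo fun r hr => ?_
        rw [← ENNReal.ofReal_mul (by positivity)]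
        exact ENNReal.ofReal_le_ofReal (pointwise r hr)
    _ = ENNReal.ofReal ((1 - a) ^ (1 - p) * (1 / ((p - 1) * (1 - a)))) := by
        rw [lintegral_const_mul' _ _ ENNReal.ofReal_ne_top,
          lintegral_one_sub_rpow_mul_one_sub_mul_rpow_neg hp ha0 ha,
          ENNReal.ofReal_mul (by positivity)]
    _ = _ := by
        rw [show 1 - p = -p + 1 by ring, Real.rpow_add_one ha'.ne']
        congr 1
        field_simp

end KernelIntegrals

section TestFunctions

variable {p q : ℝ} {w z : ℂ}

theorem one_sub_conj_mul_mem_slitPlane (hw : ‖w‖ < 1) (hz : ‖z‖ < 1) :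
    1 - conj w * z ∈ slitPlane := by
  rw [sub_eq_add_neg]
  refine mem_slitPlane_of_norm_lt_one ?_
  rw [norm_neg, norm_mul, RCLike.norm_conj]
  exact mul_lt_one_of_nonneg_of_lt_one_left (norm_nonneg w) hw hz.le

theorem one_sub_conj_mul_self (w : ℂ) : 1 - conj w * w = (1 - ‖w‖ ^ 2 : ℝ) := by
  rw [conj_mul']
  push_cast
  rfl

theorem hasDerivAt_one_sub_conj_mul (w z : ℂ) :
    HasDerivAt (fun z => 1 - conj w * z) (-conj w) z := by
  simpa using ((hasDerivAt_id z).const_mul (conj w)).const_sub 1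

theorem exists_besovEnergy_le_of_norm_deriv_rpow_le (hp : 0 ≤ p) (hq : 1 < q) :
    ∃ C : ℝ≥0, ∀ (f : ℂ → ℂ) (w : ℂ) (A : ℝ), ‖w‖ < 1 →
      (∀ z : ℂ, ‖z‖ < 1 → ‖deriv f z‖ ^ p ≤ A * ‖1 - conj w * z‖ ^ (-q)) →
      besovEnergy p f ≤ C * (ENNReal.ofReal A *
        ∫⁻ r in Ioo (0 : ℝ) 1, ENNReal.ofReal ((1 - r) ^ (p - 2) * (1 - ‖w‖ * r) ^ (1 - q))) := by
  obtain ⟨C, hC⟩ := exists_lintegral_kernel_le hq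
  refine ⟨C, fun f w A hw h => ?_⟩
  calc besovEnergy p f ≤ ∫⁻ z in ball 0 1, ENNReal.ofReal A *
        (ENNReal.ofReal ((1 - ‖z‖) ^ (p - 2)) * ‖1 - conj w * z‖ₑ ^ (-q)) := by
        refine setLIntegral_mono' measurableSet_ball fun z hz => ?_
        have hz' := mem_ball_zero_iff.1 hz
        have kernel := slitPlane_ne_zero (one_sub_conj_mul_mem_slitPlane hw hz')
        rw [besovDensity, mul_left_comm]
        gcongr
        rw [← ofReal_norm, ← ofReal_norm, ENNReal.ofReal_rpow_of_nonneg (norm_nonneg _) hp,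
          ENNReal.ofReal_rpow_of_pos (norm_pos_iff.2 kernel), ← ENNReal.ofReal_mul' (by positivity)]
        exact ENNReal.ofReal_le_ofReal (h z hz')
    _ ≤ ENNReal.ofReal A * (C * ∫⁻ r in Ioo (0 : ℝ) 1,
          ENNReal.ofReal ((1 - r) ^ (p - 2) * (1 - ‖w‖ * r) ^ (1 - q))) := by
        rw [lintegral_const_mul' _ _ ENNReal.ofReal_ne_top]
        gcongr
        exact hC _ w hw
    _ = _ := mul_left_comm _ _ _

theorem hasDerivAt_phi (hw : ‖w‖ < 1) (hz : ‖z‖ < 1) :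
    HasDerivAt (phi w) (-(1 - ‖w‖ ^ 2 : ℝ) / (1 - conj w * z) ^ 2) z := by
  have kernel := slitPlane_ne_zero (one_sub_conj_mul_mem_slitPlane hw hz)
  refine (((hasDerivAt_id z).const_sub w).div (hasDerivAt_one_sub_conj_mul w z)
    kernel).congr_deriv ?_
  rw [← one_sub_conj_mul_self, id]
  ring

theorem holOn_phi (hw : ‖w‖ < 1) : HolOn (phi w) := fun _ hz =>
  (hasDerivAt_phi hw (mem_ball_zero_iff.1 hz)).differentiableAt.differentiableWithinAt

theorem exists_phi_mem_besovBall (hp : 1 < p) :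
    ∃ K : ℝ≥0, ∀ w : ℂ, ‖w‖ < 1 → phi w ∈ besovBall p K := by
  obtain ⟨C, hC⟩ := exists_besovEnergy_le_of_norm_deriv_rpow_le (p := p) (q := 2 * p)
    (by linarith) (by linarith)
  have : 0 < p - 1 := by linarith
  refine ⟨max 1 (C * (2 ^ p / (p - 1)).toNNReal), fun w hw => ⟨holOn_phi hw, ?_, ?_⟩⟩
  · simpa [phi] using Or.inl hw.le
  have hw1 : 0 < 1 - ‖w‖ := by linarith
  have hw2 : 0 < 1 - ‖w‖ ^ 2 := by nlinarith [norm_nonneg w]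
  have derivative : ∀ z : ℂ, ‖z‖ < 1 →
      ‖deriv (phi w) z‖ ^ p ≤ (1 - ‖w‖ ^ 2) ^ p * ‖1 - conj w * z‖ ^ (-(2 * p)) := fun z hz => by
    rw [(hasDerivAt_phi hw hz).deriv, norm_div, norm_neg, norm_pow, Complex.norm_real,
      Real.norm_of_nonneg hw2.le, Real.div_rpow hw2.le (by positivity),
      Real.rpow_neg (norm_nonneg _), Real.rpow_mul (norm_nonneg _), Real.rpow_two, div_eq_mul_inv]
  calc besovEnergy p (phi w) ≤ C * (ENNReal.ofReal ((1 - ‖w‖ ^ 2) ^ p) *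
        ENNReal.ofReal ((1 - ‖w‖) ^ (-p) / (p - 1))) := by
        refine (hC _ w _ hw derivative).trans ?_
        gcongr
        exact lintegral_one_sub_rpow_mul_one_sub_mul_rpow_two_mul_le hp (norm_nonneg w) hw
    _ ≤ C * ENNReal.ofReal (2 ^ p / (p - 1)) := by
        rw [← ENNReal.ofReal_mul (by positivity)]
        gcongr C * ENNReal.ofReal ?_
        rw [← mul_div_assoc, Real.rpow_neg hw1.le, ← div_eq_mul_inv,
          ← Real.div_rpow hw2.le hw1.le]
        gcongr
        rw [div_le_iff₀ hw1]
        nlinarith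
    _ ≤ _ := by
        rw [ENNReal.ofReal, ← ENNReal.coe_mul]
        exact_mod_cast le_max_right _ _

theorem logWeight_rpow_neg_one_div_le (hp : 0 ≤ p) (hw : ‖w‖ < 1) :
    logWeight w ^ (-(1 / p)) ≤ Real.log 2 ^ (-(1 / p)) :=
  Real.rpow_le_rpow_of_nonpos (Real.log_pos one_lt_two) (log_two_le_logWeight hw)
    (neg_nonpos.2 (by positivity))

/-- The logarithm `log (2 / (1 - conj w * z))`, normalized to have bounded norm in `B^p`. It is the
extremal test function for the growth of `B^p` functions at `w`. -/
noncomputable def normalizedLog (p : ℝ) (w z : ℂ) : ℂ :=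
  (logWeight w ^ (-(1 / p)) : ℝ) * (Real.log 2 - Complex.log (1 - conj w * z))

theorem hasDerivAt_normalizedLog (p : ℝ) (hw : ‖w‖ < 1) (hz : ‖z‖ < 1) :
    HasDerivAt (normalizedLog p w)
      ((logWeight w ^ (-(1 / p)) : ℝ) * (conj w / (1 - conj w * z))) z := by
  refine ((((hasDerivAt_one_sub_conj_mul w z).clog
    (one_sub_conj_mul_mem_slitPlane hw hz)).const_sub _).const_mul _).congr_deriv ?_
  rw [neg_div, neg_neg]

theorem holOn_normalizedLog (p : ℝ) (hw : ‖w‖ < 1) : HolOn (normalizedLog p w) := fun _ hz =>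
  (hasDerivAt_normalizedLog p hw (mem_ball_zero_iff.1 hz)).differentiableAt.differentiableWithinAt

theorem norm_deriv_normalizedLog_le (p : ℝ) (hw : ‖w‖ < 1) (hz : ‖z‖ < 1) :
    ‖deriv (normalizedLog p w) z‖ ≤ logWeight w ^ (-(1 / p)) * ‖1 - conj w * z‖⁻¹ := by
  have hL := logWeight_pos hw
  rw [(hasDerivAt_normalizedLog p hw hz).deriv, norm_mul, norm_div, RCLike.norm_conj,
    Complex.norm_real, Real.norm_of_nonneg (by positivity), ← one_div]
  gcongr

theorem normalizedLog_self (p : ℝ) (hw : ‖w‖ < 1) :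
    normalizedLog p w w = (logWeight w ^ (1 - 1 / p) : ℝ) := by
  have hw' : 0 < 1 - ‖w‖ ^ 2 := by nlinarith [norm_nonneg w]
  have hL := logWeight_pos hw
  rw [normalizedLog, one_sub_conj_mul_self, ← ofReal_log hw'.le, ← ofReal_sub, ← ofReal_mul,
    ← Real.log_div two_ne_zero hw'.ne', ← logWeight, ← Real.rpow_add_one hL.ne', neg_add_eq_sub]

theorem norm_deriv_normalizedLog_rpow_le (hp : 0 < p) (hw : ‖w‖ < 1) (hz : ‖z‖ < 1) :
    ‖deriv (normalizedLog p w) z‖ ^ p ≤ (logWeight w)⁻¹ * ‖1 - conj w * z‖ ^ (-p) := by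
  have hL := logWeight_pos hw
  calc _ ≤ (logWeight w ^ (-(1 / p)) * ‖1 - conj w * z‖⁻¹) ^ p := by
        gcongr
        exact norm_deriv_normalizedLog_le p hw hz
    _ = _ := by
        rw [Real.mul_rpow (by positivity) (by positivity), ← Real.rpow_mul hL.le,
          Real.inv_rpow (norm_nonneg _), Real.rpow_neg (norm_nonneg _), neg_mul,
          one_div_mul_cancel hp.ne', Real.rpow_neg_one]

theorem norm_normalizedLog_zero_le (hp : 0 ≤ p) (hw : ‖w‖ < 1) :
    ‖normalizedLog p w 0‖ ≤ Real.log 2 ^ (-(1 / p)) * Real.log 2 := by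
  have hL := logWeight_pos hw
  have hlog2 : 0 < Real.log 2 := Real.log_pos one_lt_two
  simp only [normalizedLog, mul_zero, sub_zero, Complex.log_one, norm_mul, Complex.norm_real]
  rw [Real.norm_of_nonneg (by positivity), Real.norm_of_nonneg hlog2.le]
  gcongr ?_ * _
  exact logWeight_rpow_neg_one_div_le hp hw

theorem exists_besovEnergy_normalizedLog_le (hp : 1 < p) :
    ∃ C : ℝ≥0, ∀ w : ℂ, ‖w‖ < 1 → besovEnergy p (normalizedLog p w) ≤ C := by
  obtain ⟨C, hC⟩ := exists_besovEnergy_le_of_norm_deriv_rpow_le (p := p) (by linarith) hp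
  have hp' : 0 < p - 1 := by linarith
  have : 0 < Real.log 2 := Real.log_pos one_lt_two
  refine ⟨C * (1 / (p - 1) / Real.log 2 + 1).toNNReal, fun w hw => ?_⟩
  have hL := logWeight_pos hw
  have weights : (logWeight w)⁻¹ * (1 / (p - 1) - Real.log (1 - ‖w‖)) ≤
      1 / (p - 1) / Real.log 2 + 1 :=
    calc _ ≤ (logWeight w)⁻¹ * (1 / (p - 1) + logWeight w) := by
          gcongr
          linarith [neg_log_one_sub_norm_le_logWeight hw]
      _ = 1 / (p - 1) / logWeight w + 1 := by field_simp
      _ ≤ _ := by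
          gcongr
          exact log_two_le_logWeight hw
  calc besovEnergy p (normalizedLog p w) ≤ C * (ENNReal.ofReal (logWeight w)⁻¹ *
        ENNReal.ofReal (1 / (p - 1) - Real.log (1 - ‖w‖))) := by
        refine (hC _ w _ hw fun z => norm_deriv_normalizedLog_rpow_le (by linarith) hw).trans ?_
        gcongr
        exact lintegral_one_sub_rpow_mul_one_sub_mul_rpow_le hp (norm_nonneg w) hw
    _ ≤ C * ENNReal.ofReal (1 / (p - 1) / Real.log 2 + 1) := by
        rw [← ENNReal.ofReal_mul (by positivity)]
        gcongr
    _ = _ := by rw [ENNReal.ofReal, ENNReal.coe_mul]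

theorem exists_normalizedLog_mem_besovBall (hp : 1 < p) :
    ∃ K : ℝ≥0, ∀ w : ℂ, ‖w‖ < 1 → normalizedLog p w ∈ besovBall p K := by
  obtain ⟨C, hC⟩ := exists_besovEnergy_normalizedLog_le hp
  refine ⟨max (Real.log 2 ^ (-(1 / p)) * Real.log 2).toNNReal C,
    fun w hw => ⟨holOn_normalizedLog p hw, ?_, (hC w hw).trans ?_⟩⟩
  · exact (norm_normalizedLog_zero_le (by linarith) hw).trans
      ((Real.le_coe_toNNReal _).trans (by exact_mod_cast le_max_left _ _))
  · exact_mod_cast le_max_right _ _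

end TestFunctions

section Necessity

variable {p : ℝ} {g : ℂ → ℂ}

theorem one_mem_besov (hp : 0 < p) : (fun _ => 1) ∈ Besov p :=
  (mem_besov_iff hp.le).2 ⟨differentiableOn_const 1, by simp [besovEnergy, besovDensity, hp]⟩

theorem holOn_of_mapsInto_Mg (hp : 0 < p) (hmap : MapsInto (Mg g) (Besov p) Bloch) : HolOn g := by
  have : Mg g (fun _ => 1) = g := funext fun z => mul_one (g z)
  exact this ▸ (hmap _ (one_mem_besov hp)).1

theorem mem_Hinf_of_mapsInto_Mg (hp : 1 < p) (hmap : MapsInto (Mg g) (Besov p) Bloch) :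
    g ∈ Hinf := by
  have hol := holOn_of_mapsInto_Mg (by linarith) hmap
  obtain ⟨K, hK⟩ := exists_phi_mem_besovBall hp
  obtain ⟨C, hC⟩ := exists_bloch_bound_Mg hp.le hol hmap K
  refine ⟨hol, C, fun w hw => ?_⟩
  rw [mem_ball_zero_iff] at hw
  have hw' : 0 < 1 - ‖w‖ ^ 2 := by nlinarith [norm_nonneg w]
  have vanish : phi w w = 0 := by simp [phi]
  have value : (1 - ‖w‖ ^ 2) * ‖deriv (Mg g (phi w)) w‖ = ‖g w‖ := by
    rw [deriv_Mg hol (holOn_phi hw) hw, vanish, (hasDerivAt_phi hw hw).deriv,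
      one_sub_conj_mul_self, mul_zero, zero_add, norm_mul, norm_div, norm_neg, norm_pow,
      Complex.norm_real, Real.norm_of_nonneg hw'.le]
    field_simp
  exact value ▸ hC _ (hK w hw) w hw

theorem mem_blochLog_of_mapsInto_Mg (hp : 1 < p) (hmap : MapsInto (Mg g) (Besov p) Bloch) :
    g ∈ BlochLog (1 - 1 / p) := by
  obtain ⟨hol, M, bounded⟩ := mem_Hinf_of_mapsInto_Mg hp hmap
  obtain ⟨K, hK⟩ := exists_normalizedLog_mem_besovBall hp
  obtain ⟨C, hC⟩ := exists_bloch_bound_Mg hp.le hol hmap K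
  refine ⟨hol, C + M * Real.log 2 ^ (-(1 / p)), fun w hw => ?_⟩
  have bounded_w := bounded w hw
  rw [mem_ball_zero_iff] at hw
  have hw' : 0 < 1 - ‖w‖ ^ 2 := by nlinarith [norm_nonneg w]
  have hL := logWeight_pos hw
  set f := normalizedLog p w
  have bloch : (1 - ‖w‖ ^ 2) * ‖deriv f w‖ ≤ Real.log 2 ^ (-(1 / p)) := by
    refine le_trans ?_ (logWeight_rpow_neg_one_div_le (by linarith) hw)
    have := norm_deriv_normalizedLog_le p hw hw
    rwa [one_sub_conj_mul_self, Complex.norm_real, Real.norm_of_nonneg hw'.le,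
      ← div_eq_mul_inv, le_div_iff₀' hw'] at this
  have product : ‖deriv g w‖ * logWeight w ^ (1 - 1 / p) ≤
      ‖deriv (Mg g f) w‖ + ‖g w‖ * ‖deriv f w‖ := by
    have value : ‖deriv g w * f w‖ = ‖deriv g w‖ * logWeight w ^ (1 - 1 / p) := by
      rw [norm_mul, show f w = _ from normalizedLog_self p hw, Complex.norm_real,
        Real.norm_of_nonneg (by positivity)]
    rw [← value, ← norm_mul, deriv_Mg hol (holOn_normalizedLog p hw) hw]
    simpa using norm_sub_le (deriv g w * f w + g w * deriv f w) (g w * deriv f w)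
  calc (1 - ‖w‖ ^ 2) * logWeight w ^ (1 - 1 / p) * ‖deriv g w‖
      = (1 - ‖w‖ ^ 2) * (‖deriv g w‖ * logWeight w ^ (1 - 1 / p)) := by ring
    _ ≤ (1 - ‖w‖ ^ 2) * (‖deriv (Mg g f) w‖ + ‖g w‖ * ‖deriv f w‖) := by gcongr
    _ = (1 - ‖w‖ ^ 2) * ‖deriv (Mg g f) w‖ + ‖g w‖ * ((1 - ‖w‖ ^ 2) * ‖deriv f w‖) := by ring
    _ ≤ C + M * Real.log 2 ^ (-(1 / p)) := by
        gcongr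
        · exact hC _ (hK w hw) w hw
        · exact (norm_nonneg _).trans bounded_w

end Necessity

theorem stmt3_general (p p' : ℝ) (hp : 1 < p) (hpp' : 1 / p + 1 / p' = 1) (g : ℂ → ℂ) :
    MapsInto (Mg g) (Besov p) Bloch ↔ g ∈ Hinf ∩ BlochLog (1 / p') := by
  rw [eq_sub_of_add_eq' hpp']
  exact ⟨fun hmap => ⟨mem_Hinf_of_mapsInto_Mg hp hmap, mem_blochLog_of_mapsInto_Mg hp hmap⟩,
    mapsInto_Mg_of_mem_Hinf_inter_blochLog hp.le⟩

/-- For `1 < p < ∞` with conjugate exponent `p'` and `g` holomorphic on the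
unit disc, `M_g` maps `Bᵖ` into the Bloch space iff `g ∈ H^∞ ∩ 𝓑_{log,1/p'}`. -/
theorem stmt3 (p p' : ℝ) (hp : 1 < p) (hpp' : 1 / p + 1 / p' = 1)
    (g : ℂ → ℂ) (hg : HolOn g) :
    MapsInto (Mg g) (Besov p) Bloch ↔ g ∈ Hinf ∩ BlochLog (1 / p') :=
  stmt3_general p p' hp hpp' g
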